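/- arXiv:1111.5366 — 2 statements merged into one kernel-verified Lean document; each statement's English description precedes it below -/
import Mathlib

section
/- (Elliptic (N,N′)-soliton solution of the lattice KP equation.) The function w = ζ(ξ) − w₀ − nζ(δ) − mζ(ε) − hζ(λ) satisfies the lattice potential KP equation (ŵ̄ − w̃̄)·(w̄ − w̃) = (ŵ̄ − ŵ̃)·(ŵ − w̃) at every (n,m,h) ∈ ℤ³, where w̃, ŵ, w̄ denote w evaluated at (n+1,m,h), (n,m+1,h), (n,m,h+1), and ŵ̃, w̃̄, ŵ̄ at (n+1,m+1,h), (n+1,m,h+1), (n,m+1,h+1). -/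
open scoped BigOperators

noncomputable section

/-- A period lattice in `ℂ` spanned by two `ℝ`-independent periods. -/
structure EllLattice where
  ω₁ : ℂ
  ω₂ : ℂ
  indep : ∀ a b : ℝ, a • ω₁ + b • ω₂ = 0 → a = 0 ∧ b = 0

namespace EllLattice

/-- Membership in the lattice `Λ = ℤω₁ + ℤω₂`. -/
def mem (L : EllLattice) (z : ℂ) : Prop := ∃ m n : ℤ, z = m • L.ω₁ + n • L.ω₂

/-- The lattice point with integer coordinates `p = (m, n)`. -/
def per (L : EllLattice) (p : ℤ × ℤ) : ℂ := p.1 • L.ω₁ + p.2 • L.ω₂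

/-- The Weierstrass sigma function associated to the lattice, defined by its
Hadamard product over the nonzero lattice points. -/
def sigma (L : EllLattice) (z : ℂ) : ℂ :=
  z * ∏' p : {p : ℤ × ℤ // p ≠ 0},
      ((1 - z / L.per p.1) *
        Complex.exp (z / L.per p.1 + z ^ 2 / (2 * (L.per p.1) ^ 2)))

/-- The Weierstrass zeta function `ζ = σ′/σ`. -/
def zeta (L : EllLattice) (z : ℂ) : ℂ := deriv L.sigma z / L.sigma z

/-- The Weierstrass `℘`-function `℘ = −ζ′`. -/
def wp (L : EllLattice) (z : ℂ) : ℂ := - deriv L.zeta z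

/-- `Φ_ξ(κ) = σ(ξ+κ)/(σ(ξ)σ(κ))`. -/
def Phi (L : EllLattice) (ξ κ : ℂ) : ℂ := L.sigma (ξ + κ) / (L.sigma ξ * L.sigma κ)

/-- The Lamé function `Ψ_ξ(κ) = Φ_ξ(κ)·e^{−ζ(ξ)κ}`. -/
def Psi (L : EllLattice) (ξ κ : ℂ) : ℂ := L.Phi ξ κ * Complex.exp (-(L.zeta ξ) * κ)

/-- `η_δ(ξ) = ζ(ξ+δ) − ζ(ξ) − ζ(δ)`. -/
def eta (L : EllLattice) (δ ξ : ℂ) : ℂ := L.zeta (ξ + δ) - L.zeta ξ - L.zeta δ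

/-- `χ_{α,β}(ξ) = ζ(α) + ζ(β) + ζ(ξ) − ζ(ξ+α+β)`. -/
def chi (L : EllLattice) (α β ξ : ℂ) : ℂ :=
  L.zeta α + L.zeta β + L.zeta ξ - L.zeta (ξ + α + β)

end EllLattice

open Matrix

/-- All the data entering the elliptic (N,N′)-soliton solutions of the lattice KP system:
a period lattice, lattice parameters `δ, ε, λ`, a base point `ξ₀`, rapidity parameters
`κ_i, κ′_j`, initial plane-wave constants `ρ⁰_i, ν⁰_j` and a constant `N′×N` matrix `C`. -/
structure KPData (N N' : ℕ) where
  L : EllLattice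
  del : ℂ
  eps : ℂ
  lam : ℂ
  xi0 : ℂ
  κ : Fin N → ℂ
  κ' : Fin N' → ℂ
  ρ0 : Fin N → ℂ
  ν0 : Fin N' → ℂ
  C : Matrix (Fin N') (Fin N) ℂ

namespace KPData

variable {N N' : ℕ}

/-- `ξ = ξ₀ + nδ + mε + hλ`. -/
def xi (D : KPData N N') (n m h : ℤ) : ℂ :=
  D.xi0 + n • D.del + m • D.eps + h • D.lam

/-- The plane-wave factor `ρ_i(n,m,h)`. -/
def ρ (D : KPData N N') (i : Fin N) (n m h : ℤ) : ℂ :=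
  (Complex.exp (-(D.L.zeta D.del) * D.κ i) * D.L.Psi D.del (-(D.κ i))) ^ n *
  (Complex.exp (-(D.L.zeta D.eps) * D.κ i) * D.L.Psi D.eps (-(D.κ i))) ^ m *
  (Complex.exp (-(D.L.zeta D.lam) * D.κ i) * D.L.Psi D.lam (-(D.κ i))) ^ h *
  Complex.exp (D.L.zeta (D.xi n m h) * D.κ i) * D.ρ0 i

/-- The plane-wave factor `ν_j(n,m,h)`. -/
def ν (D : KPData N N') (j : Fin N') (n m h : ℤ) : ℂ :=
  (Complex.exp (D.L.zeta D.del * D.κ' j) * D.L.Psi D.del (D.κ' j)) ^ (-n) *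
  (Complex.exp (D.L.zeta D.eps * D.κ' j) * D.L.Psi D.eps (D.κ' j)) ^ (-m) *
  (Complex.exp (D.L.zeta D.lam * D.κ' j) * D.L.Psi D.lam (D.κ' j)) ^ (-h) *
  Complex.exp (D.L.zeta (D.xi n m h) * D.κ' j) * D.ν0 j

/-- The dressed elliptic Cauchy matrix `M_{ij} = ρ_i Ψ_ξ(κ_i + κ′_j) ν_j`. -/
def M (D : KPData N N') (n m h : ℤ) : Matrix (Fin N) (Fin N') ℂ :=
  Matrix.of fun i j => D.ρ i n m h * D.L.Psi (D.xi n m h) (D.κ i + D.κ' j) * D.ν j n m h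

/-- The column vector `r = (ρ_i Ψ_ξ(κ_i))_i`. -/
def r (D : KPData N N') (n m h : ℤ) : Fin N → ℂ :=
  fun i => D.ρ i n m h * D.L.Psi (D.xi n m h) (D.κ i)

/-- The column vector `s = (ν_j Ψ_ξ(κ′_j))_j`. -/
def s (D : KPData N N') (n m h : ℤ) : Fin N' → ℂ :=
  fun j => D.ν j n m h * D.L.Psi (D.xi n m h) (D.κ' j)

/-- The τ-function `τ = det(1 + MC)`. -/
def τ (D : KPData N N') (n m h : ℤ) : ℂ := (1 + D.M n m h * D.C).det

/-- The diagonal matrix `χ_{α,K}(ξ) = diag(χ_{α,κ_i}(ξ))`. -/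
def DK (D : KPData N N') (α : ℂ) (n m h : ℤ) : Matrix (Fin N) (Fin N) ℂ :=
  Matrix.diagonal fun i => D.L.chi α (D.κ i) (D.xi n m h)

/-- The diagonal matrix `χ_{β,K′}(ξ) = diag(χ_{β,κ′_j}(ξ))`. -/
def DK' (D : KPData N N') (β : ℂ) (n m h : ℤ) : Matrix (Fin N') (Fin N') ℂ :=
  Matrix.diagonal fun j => D.L.chi β (D.κ' j) (D.xi n m h)

/-- `W_β = 1 − sᵀ (χ_{β,K′}(ξ))⁻¹ C (1+MC)⁻¹ r`. -/
def W (D : KPData N N') (β : ℂ) (n m h : ℤ) : ℂ :=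
  1 - D.s n m h ⬝ᵥ ((D.DK' β n m h)⁻¹ *ᵥ (D.C *ᵥ ((1 + D.M n m h * D.C)⁻¹ *ᵥ D.r n m h)))

/-- `V_α = 1 − sᵀ (1+CM)⁻¹ C (χ_{α,K}(ξ))⁻¹ r`. -/
def V (D : KPData N N') (α : ℂ) (n m h : ℤ) : ℂ :=
  1 - D.s n m h ⬝ᵥ ((1 + D.C * D.M n m h)⁻¹ *ᵥ (D.C *ᵥ ((D.DK α n m h)⁻¹ *ᵥ D.r n m h)))

/-- `w₀ = sᵀ C (1+MC)⁻¹ r`. -/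
def w0 (D : KPData N N') (n m h : ℤ) : ℂ :=
  D.s n m h ⬝ᵥ (D.C *ᵥ ((1 + D.M n m h * D.C)⁻¹ *ᵥ D.r n m h))

/-- `w = ζ(ξ) − w₀ − nζ(δ) − mζ(ε) − hζ(λ)`. -/
def w (D : KPData N N') (n m h : ℤ) : ℂ :=
  D.L.zeta (D.xi n m h) - D.w0 n m h - n • D.L.zeta D.del - m • D.L.zeta D.eps -
    h • D.L.zeta D.lam

/-- `S_{β,α} = sᵀ (χ_{β,K′}(ξ))⁻¹ C (1+MC)⁻¹ (χ_{α,K}(ξ))⁻¹ r`. -/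
def S (D : KPData N N') (β α : ℂ) (n m h : ℤ) : ℂ :=
  D.s n m h ⬝ᵥ ((D.DK' β n m h)⁻¹ *ᵥ
    (D.C *ᵥ ((1 + D.M n m h * D.C)⁻¹ *ᵥ ((D.DK α n m h)⁻¹ *ᵥ D.r n m h))))

/-- `u_α = (1+MC)⁻¹ (χ_{α,K}(ξ))⁻¹ r`. -/
def u (D : KPData N N') (α : ℂ) (n m h : ℤ) : Fin N → ℂ :=
  (1 + D.M n m h * D.C)⁻¹ *ᵥ ((D.DK α n m h)⁻¹ *ᵥ D.r n m h)

/-- `u₀ = (1+MC)⁻¹ r`. -/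
def u0 (D : KPData N N') (n m h : ℤ) : Fin N → ℂ :=
  (1 + D.M n m h * D.C)⁻¹ *ᵥ D.r n m h

/-- the adjoint (row) vector `ᵗu_β = sᵀ (χ_{β,K′}(ξ))⁻¹ (1+CM)⁻¹`. -/
def tu (D : KPData N N') (β : ℂ) (n m h : ℤ) : Fin N' → ℂ :=
  (D.s n m h ᵥ* (D.DK' β n m h)⁻¹) ᵥ* (1 + D.C * D.M n m h)⁻¹

/-- the adjoint (row) vector `ᵗu₀ = sᵀ (1+CM)⁻¹`. -/
def tu0 (D : KPData N N') (n m h : ℤ) : Fin N' → ℂ :=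
  D.s n m h ᵥ* (1 + D.C * D.M n m h)⁻¹

/-- The gauge variable `𝒱_α = Φ_ξ(α)·V_α`. -/
def calV (D : KPData N N') (α : ℂ) (n m h : ℤ) : ℂ :=
  D.L.Phi (D.xi n m h) α * D.V α n m h

/-- The gauge variable `𝒲_β = Φ_ξ(β)·W_β`. -/
def calW (D : KPData N N') (β : ℂ) (n m h : ℤ) : ℂ :=
  D.L.Phi (D.xi n m h) β * D.W β n m h

/-- The Schwarzian variable `Z_{β,α} = Φ_ξ(α+β)·(1 − χ_{α,β}(ξ)·S_{β,α})`. -/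
def Z (D : KPData N N') (β α : ℂ) (n m h : ℤ) : ℂ :=
  D.L.Phi (D.xi n m h) (α + β) * (1 - D.L.chi α β (D.xi n m h) * D.S β α n m h)

/-- Genericity of the parameters (together with finitely many auxiliary points `extra`):
no nontrivial integer combination of `ξ₀, δ, ε, λ`, the rapidity parameters and the
auxiliary points lies on the lattice.  In particular all arguments of `σ` occurring in
the soliton solutions and their shifts lie outside `Λ`. -/
def Generic {P : ℕ} (D : KPData N N') (extra : Fin P → ℂ) : Prop :=
  ∀ (c0 cn cm ch : ℤ) (a : Fin N → ℤ) (b : Fin N' → ℤ) (e : Fin P → ℤ),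
    ¬ (c0 = 0 ∧ cn = 0 ∧ cm = 0 ∧ ch = 0 ∧ a = 0 ∧ b = 0 ∧ e = 0) →
    ¬ D.L.mem (c0 • D.xi0 + cn • D.del + cm • D.eps + ch • D.lam +
      (∑ i, a i • D.κ i) + (∑ j, b j • D.κ' j) + ∑ t, e t • extra t)

end KPData

namespace EllAux

open Filter Topology

/-- Weierstrass elementary factor. -/
def fac (l z : ℂ) : ℂ := (1 - z / l) * Complex.exp (z / l + z ^ 2 / (2 * l ^ 2))

lemma fac_zero_left (z : ℂ) : fac 0 z = 1 := by simp [fac]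

lemma fac_zero_right (l : ℂ) : fac l 0 = 1 := by simp [fac]

lemma fac_diff (l : ℂ) : Differentiable ℂ (fac l) := by
  unfold fac
  fun_prop

lemma elem_bound (u : ℂ) (hu : ‖u‖ ≤ 1) :
    ‖(1 - u) * Complex.exp (u + u ^ 2 / 2) - 1‖ ≤ 50 * ‖u‖ ^ 3 := by
  set v := u + u ^ 2 / 2 with hv
  have hv1 : ‖v‖ ≤ 3 / 2 * ‖u‖ := by
    calc ‖v‖ ≤ ‖u‖ + ‖u ^ 2 / 2‖ := norm_add_le _ _
      _ = ‖u‖ + ‖u‖ ^ 2 / 2 := by simp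
      _ ≤ _ := by nlinarith [norm_nonneg u]
  have h1 := Complex.exp_bound' (x := v) (n := 3) (by
    norm_num; linarith)
  set e := Complex.exp v - ∑ m ∈ Finset.range 3, v ^ m / m.factorial with he
  have h2 : (1 - u) * Complex.exp v - 1 = (1 - u) * e - u ^ 3 * (1 / 2 + 3 / 8 * u + u ^ 2 / 8) := by
    rw [he]
    simp only [Finset.sum_range_succ, Finset.sum_range_zero, Nat.factorial]
    rw [hv]
    push_cast
    ring
  have h3 : ‖e‖ ≤ 27 / 8 * ‖u‖ ^ 3 := by
    have : ‖v‖ ^ 3 ≤ (3 / 2 * ‖u‖) ^ 3 := by gcongr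
    have h4 : ‖v‖ ^ 3 / (Nat.factorial 3 : ℝ) * 2 = ‖v‖ ^ 3 / 3 := by
      simp [Nat.factorial]; ring
    rw [h4] at h1
    have : 0 ≤ ‖u‖ ^ 3 := by positivity
    nlinarith
  have h5 : ‖1 - u‖ ≤ 2 := by
    calc ‖1 - u‖ ≤ ‖(1 : ℂ)‖ + ‖u‖ := norm_sub_le _ _
      _ ≤ 2 := by simp; linarith
  have h6 : ‖1 / 2 + 3 / 8 * u + u ^ 2 / 8‖ ≤ 1 := by
    calc _ ≤ ‖(1 / 2 : ℂ)‖ + ‖3 / 8 * u‖ + ‖u ^ 2 / 8‖ := norm_add₃_le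
      _ = 1 / 2 + 3 / 8 * ‖u‖ + ‖u‖ ^ 2 / 8 := by simp
      _ ≤ 1 := by nlinarith [norm_nonneg u]
  rw [h2]
  calc _ ≤ ‖(1 - u) * e‖ + ‖u ^ 3 * (1 / 2 + 3 / 8 * u + u ^ 2 / 8)‖ := norm_sub_le _ _
    _ = ‖1 - u‖ * ‖e‖ + ‖u‖ ^ 3 * ‖1 / 2 + 3 / 8 * u + u ^ 2 / 8‖ := by simp
    _ ≤ 2 * (27 / 8 * ‖u‖ ^ 3) + ‖u‖ ^ 3 * 1 := by gcongr
    _ ≤ _ := by nlinarith [pow_nonneg (norm_nonneg u) 3]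

lemma fac_bound (r : ℝ) (z l : ℂ) (hz : ‖z‖ ≤ r) (h : r ≤ ‖l‖) :
    ‖fac l z - 1‖ ≤ 50 * r ^ 3 * ‖l‖ ^ (-3 : ℝ) := by
  by_cases hl : l = 0
  · subst hl
    have hr : 0 ≤ r := (norm_nonneg z).trans hz
    simp only [fac_zero_left, sub_self, norm_zero]
    positivity
  have hl' : 0 < ‖l‖ := norm_pos_iff.mpr hl
  have h0 : ‖z / l‖ ≤ 1 := by
    rw [norm_div, div_le_one hl']; exact hz.trans h
  have := elem_bound (z / l) h0
  have e : fac l z = (1 - z / l) * Complex.exp (z / l + (z / l) ^ 2 / 2) := by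
    unfold fac; congr 2; field_simp
  rw [e]
  refine this.trans ?_
  rw [norm_div, div_pow, mul_assoc]
  have : ‖l‖ ^ (-3 : ℝ) = (‖l‖ ^ 3)⁻¹ := by
    rw [Real.rpow_neg hl'.le]; norm_cast
  rw [this, div_eq_mul_inv]
  gcongr

variable (L : PeriodPair)

lemma fac_ev (r : ℝ) : ∀ᶠ l : L.lattice in cofinite, ∀ z ∈ Metric.ball (0:ℂ) r,
    ‖fac l z - 1‖ ≤ 50 * r ^ 3 * ‖l.1‖ ^ (-3 : ℝ) := by
  have hfin := (isCompact_iff_finite.mp (isCompact_closedBall (0 : L.lattice) r))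
  refine hfin.subset ?_
  intro l hl
  by_contra hcon
  apply hl
  intro z hz
  apply fac_bound
  · simpa using (mem_ball_zero_iff.mp hz).le
  · simp only [Metric.mem_closedBall, dist_zero_right, not_le] at hcon
    exact hcon.le

lemma summ_bd (r : ℝ) : Summable fun l : L.lattice => 50 * r ^ 3 * ‖l.1‖ ^ (-3 : ℝ) :=
  (ZLattice.summable_norm_rpow _ _ (by simp; norm_num)).mul_left _

/-- The product part of sigma. -/
def P (z : ℂ) : ℂ := ∏' l : L.lattice, fac l z

lemma P_prod : HasProdLocallyUniformlyOn (fun (l : L.lattice) z => fac l z) (P L) Set.univ := by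
  apply hasProdLocallyUniformlyOn_of_of_forall_exists_nhds
  intro x _
  refine ⟨Metric.closedBall 0 (‖x‖ + 1), ?_, ?_⟩
  · exact mem_nhdsWithin_of_mem_nhds (mem_of_superset (Metric.isOpen_ball.mem_nhds
      (by simp : x ∈ Metric.ball (0:ℂ) (‖x‖ + 1))) Metric.ball_subset_closedBall)
  · have := Summable.hasProdUniformlyOn_one_add (f := fun (l : L.lattice) z => fac l z - 1)
      (isCompact_closedBall (0:ℂ) (‖x‖ + 1)) (summ_bd L (‖x‖ + 2))
      (by
        filter_upwards [fac_ev L (‖x‖ + 2)] with l hl z hz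
        apply hl
        simp at hz ⊢
        linarith)
      (fun l => ((fac_diff l).continuous.sub continuous_const).continuousOn)
    simp only [add_sub_cancel] at this
    exact this

lemma P_diff : Differentiable ℂ (P L) := by
  rw [← differentiableOn_univ]
  refine (P_prod L).differentiableOn ?_ isOpen_univ
  refine .of_forall fun s => ?_
  apply Differentiable.differentiableOn
  have : ∀ l : L.lattice, Differentiable ℂ (fac l) := fun l => fac_diff l
  fun_prop

lemma P_zero : P L 0 = 1 := by simp [P, fac_zero_right]

lemma fac_ne {l z : ℂ} (h : z ≠ l ∨ l = 0) : fac l z ≠ 0 := by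
  rcases eq_or_ne l 0 with rfl | hl
  · simp [fac]
  · have : z ≠ l := by tauto
    unfold fac
    refine mul_ne_zero ?_ (Complex.exp_ne_zero _)
    rw [sub_ne_zero]
    intro h
    rw [eq_div_iff hl] at h
    apply this; rw [← h]; ring

lemma P_ne {z : ℂ} (hz : z ∈ ((L.lattice : Set ℂ) \ {0})ᶜ) : P L z ≠ 0 := by
  have := tprod_one_add_ne_zero_of_summable (f := fun (l : L.lattice) => fac l z - 1) ?_ ?_
  · simpa [P] using this
  · intro l
    simp only [add_sub_cancel]
    apply fac_ne
    by_contra hcon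
    push Not at hcon
    apply hz
    refine ⟨hcon.1 ▸ l.2, ?_⟩
    rw [hcon.1]
    exact hcon.2
  · refine Summable.of_norm_bounded_eventually (summ_bd L (‖z‖ + 1)) ?_
    filter_upwards [fac_ev L (‖z‖ + 1)] with l hl
    simpa using hl z (by simp)

/-- termwise log derivative -/
def T (l z : ℂ) : ℂ := if l = 0 then 0 else 1 / (z - l) + 1 / l + z / l ^ 2

lemma logDeriv_fac {l z : ℂ} (h : z ≠ l ∨ l = 0) : logDeriv (fac l) z = T l z := by
  rcases eq_or_ne l 0 with rfl | hl
  · have : fac 0 = fun _ => 1 := by ext z; simp [fac_zero_left]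
    simp [this, T]
  · have hzl : z - l ≠ 0 := sub_ne_zero.mpr (by tauto)
    have h1 : HasDerivAt (fun z : ℂ => 1 - z / l) (-(1 / l)) z := by
      simpa using ((hasDerivAt_id z).div_const l).const_sub 1
    have h2 : HasDerivAt (fun z : ℂ => z / l + z ^ 2 / (2 * l ^ 2)) (1 / l + z / l ^ 2) z := by
      have := ((hasDerivAt_id z).div_const l).add ((hasDerivAt_pow 2 z).div_const (2 * l ^ 2))
      convert! this using 1
      simp
      field_simp
    have h3 := (h1.mul h2.cexp).deriv
    have h4 : deriv (fac l) z = _ := h3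
    rw [logDeriv_apply, h4, T, if_neg hl, fac]
    have he := Complex.exp_ne_zero (z / l + z ^ 2 / (2 * l ^ 2))
    have h5 : 1 - z / l = - (z - l) / l := by field_simp; ring
    rw [h5]
    field_simp
    ring

lemma T_deriv {l z : ℂ} (h : z ≠ l ∨ l = 0) :
    HasDerivAt (T l) (-(if l = 0 then 0 else (1 / (z - l) ^ 2 - 1 / l ^ 2))) z := by
  rcases eq_or_ne l 0 with rfl | hl
  · have : T 0 = fun _ => 0 := by ext z; simp [T]
    rw [this]; simpa using hasDerivAt_const z (0:ℂ)
  · have hzl : z - l ≠ 0 := sub_ne_zero.mpr (by tauto)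
    have : T l = fun z => (z - l)⁻¹ + 1 / l + z / l ^ 2 := by ext z; simp [T, hl]
    rw [this, if_neg hl]
    have := ((((hasDerivAt_id z).sub_const l).inv hzl).add_const (1 / l)).add
      ((hasDerivAt_id z).div_const (l ^ 2))
    convert! this using 1
    simp
    ring

lemma logDeriv_P_deriv {z : ℂ} (hz : z ∈ ((L.lattice : Set ℂ) \ {0})ᶜ) :
    HasDerivAt (logDeriv (P L)) (-(L.weierstrassPExcept 0 z)) z := by
  have hcond : ∀ (l : L.lattice), ∀ x ∈ ((L.lattice : Set ℂ) \ {0})ᶜ, x ≠ (l:ℂ) ∨ (l:ℂ) = 0 := by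
    intro l x hx
    by_contra hcon
    push Not at hcon
    exact hx ⟨hcon.1 ▸ l.2, by rw [hcon.1]; exact hcon.2⟩
  have hS := L.hasSumLocallyUniformly_weierstrassPExcept 0
  rw [hasSumLocallyUniformly_iff_tendstoLocallyUniformly] at hS
  have hS' := (hS.neg).tendstoLocallyUniformlyOn (s := ((L.lattice : Set ℂ) \ {0})ᶜ)
  refine hasDerivAt_of_tendstoLocallyUniformlyOn (l := atTop)
    (f := fun (s : Finset L.lattice) z => ∑ l ∈ s, T l z)
    L.isOpen_compl_lattice_sdiff hS' ?_ ?_ hz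
  · refine .of_forall fun s x hx => ?_
    have := HasDerivAt.fun_sum (u := s) (fun l _ => T_deriv (hcond l x hx))
    convert! this using 1
    simp
  · intro x hx
    have h1 := (P_prod L)
    rw [hasProdLocallyUniformlyOn_iff_tendstoLocallyUniformlyOn] at h1
    have h2 := Complex.logDeriv_tendsto isOpen_univ (Set.mem_univ x) h1
      (.of_forall fun s => by
        apply Differentiable.differentiableOn
        have : ∀ l : L.lattice, Differentiable ℂ (fac l) := fun l => fac_diff l
        fun_prop) (P_ne L hx)
    refine h2.congr fun s => ?_
    rw [logDeriv_prod (fun i _ => fac_ne (hcond i x hx)) (fun i _ => (fac_diff i) x)]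
    exact Finset.sum_congr rfl fun l _ => logDeriv_fac (hcond l x hx)

end EllAux

namespace EllAux

open Filter Topology

/-- The Mathlib period pair. -/
def pp (L : EllLattice) : PeriodPair where
  ω₁ := L.ω₁
  ω₂ := L.ω₂
  indep := LinearIndependent.pair_iff.mpr L.indep

lemma mem_iff (L : EllLattice) (z : ℂ) : L.mem z ↔ z ∈ (pp L).lattice := by
  rw [PeriodPair.mem_lattice]
  simp only [EllLattice.mem, zsmul_eq_mul, pp]
  constructor
  · rintro ⟨m, n, h⟩; exact ⟨m, n, h.symm⟩
  · rintro ⟨m, n, h⟩; exact ⟨m, n, h.symm⟩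

lemma sigma_eq (L : EllLattice) (z : ℂ) : L.sigma z = z * P (pp L) z := by
  unfold EllLattice.sigma P
  congr 1
  rw [← ((pp L).latticeEquivProd.symm.toEquiv).tprod_eq]
  have h1 : ∀ p : ℤ × ℤ, fac (((pp L).latticeEquivProd.symm.toEquiv p : (pp L).lattice) : ℂ) z
      = fac (L.per p) z := by
    intro p
    congr 1
    have := (pp L).latticeEquiv_symm_apply p
    simp only [EllLattice.per, zsmul_eq_mul]
    exact this
  simp_rw [h1]
  have h2 : ∀ p : {p : ℤ × ℤ // p ≠ 0}, ((1 - z / L.per p.1) *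
        Complex.exp (z / L.per p.1 + z ^ 2 / (2 * (L.per p.1) ^ 2))) =
        (fun p => fac (L.per p) z) p.1 := fun p => rfl
  simp_rw [h2]
  refine tprod_subtype_eq_of_mulSupport_subset (f := fun p => fac (L.per p) z)
    (s := {p : ℤ × ℤ | p ≠ 0}) ?_
  intro p hp h0
  apply hp
  subst h0
  simp [EllLattice.per, fac_zero_left]

lemma sigma_eq' (L : EllLattice) : L.sigma = fun z => z * P (pp L) z := funext (sigma_eq L)

lemma sigma_diff (L : EllLattice) : Differentiable ℂ L.sigma := by
  rw [sigma_eq']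
  exact differentiable_id.mul (P_diff _)

lemma sigma_deriv_zero (L : EllLattice) : deriv L.sigma 0 = 1 := by
  rw [sigma_eq']
  have := ((hasDerivAt_id (0:ℂ)).mul (P_diff (pp L) 0).hasDerivAt).deriv
  simp only [id] at this
  refine this.trans ?_
  simp [P_zero]

lemma sigma_ne (L : EllLattice) {z : ℂ} (hz : ¬ L.mem z) : L.sigma z ≠ 0 := by
  rw [mem_iff] at hz
  rw [sigma_eq]
  refine mul_ne_zero ?_ (P_ne _ fun h => hz h.1)
  rintro rfl
  exact hz (zero_mem _)

lemma P_mem (L : PeriodPair) {z : ℂ} (hz : z ∈ L.lattice) (h0 : z ≠ 0) : P L z = 0 := by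
  unfold P
  apply tprod_of_exists_eq_zero
  exact ⟨⟨z, hz⟩, by simp [fac, h0]⟩

lemma sigma_mem (L : EllLattice) {z : ℂ} (hz : L.mem z) : L.sigma z = 0 := by
  rw [sigma_eq]
  rcases eq_or_ne z 0 with rfl | h
  · simp
  · rw [P_mem _ ((mem_iff _ _).mp hz) h]; simp

lemma sigma_eq_zero_iff (L : EllLattice) {z : ℂ} : L.sigma z = 0 ↔ L.mem z :=
  ⟨fun h => by by_contra hc; exact sigma_ne L hc h, sigma_mem L⟩

lemma P_neg (L : PeriodPair) (z : ℂ) : P L (-z) = P L z := by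
  unfold P
  rw [← (Equiv.neg L.lattice).tprod_eq]
  congr 1
  ext l
  simp [fac]

lemma sigma_neg (L : EllLattice) (z : ℂ) : L.sigma (-z) = - L.sigma z := by
  rw [sigma_eq, sigma_eq, P_neg]; ring

lemma compl_sub (L : PeriodPair) {z : ℂ} (hz : z ∉ L.lattice) :
    z ∈ ((L.lattice : Set ℂ) \ {0})ᶜ := fun h => hz h.1

lemma zeta_eq (L : EllLattice) {z : ℂ} (hz : z ∉ (pp L).lattice) :
    L.zeta z = z⁻¹ + logDeriv (P (pp L)) z := by
  have h0 : z ≠ 0 := by rintro rfl; exact hz (zero_mem _)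
  have h1 : L.zeta z = logDeriv L.sigma z := rfl
  rw [h1, sigma_eq']
  have := logDeriv_mul (f := fun z : ℂ => z) (g := P (pp L)) z h0 (P_ne _ (compl_sub _ hz))
    differentiableAt_id (P_diff (pp L) z)
  refine this.trans ?_
  congr 1
  simp [logDeriv_apply]

lemma zeta_deriv (L : EllLattice) {z : ℂ} (hz : z ∉ (pp L).lattice) :
    HasDerivAt L.zeta (-(pp L).weierstrassP z) z := by
  have h0 : z ≠ 0 := by rintro rfl; exact hz (zero_mem _)
  have h1 := (hasDerivAt_inv h0).add (logDeriv_P_deriv (pp L) (compl_sub _ hz))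
  have h2 : L.zeta =ᶠ[𝓝 z] ((fun z => z⁻¹) + logDeriv (P (pp L))) := by
    filter_upwards [(pp L).isClosed_lattice.isOpen_compl.mem_nhds hz] with w hw
    exact zeta_eq L hw
  have h3 := h1.congr_of_eventuallyEq h2
  convert! h3 using 1
  have := (pp L).weierstrassPExcept_add 0 z
  rw [← this]
  simp

lemma countable_lattice (L : PeriodPair) : (L.lattice : Set ℂ).Countable := by
  have : Countable L.lattice := L.latticeEquivProd.toEquiv.countable_iff.mpr inferInstance
  exact Set.to_countable _

lemma preconn (L : PeriodPair) : IsPreconnected (L.lattice : Set ℂ)ᶜ :=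
  ((countable_lattice L).isPathConnected_compl_of_one_lt_rank
    (by rw [Complex.rank_real_complex]; norm_num)).isConnected.isPreconnected

lemma quasi (L : EllLattice) {l : ℂ} (hl : L.mem l) :
    ∃ c η : ℂ, c ≠ 0 ∧ ∀ z, L.sigma (z + l) = c * Complex.exp (η * z) * L.sigma z := by
  rw [mem_iff] at hl
  have hopen : IsOpen ((pp L).lattice : Set ℂ)ᶜ := (pp L).isClosed_lattice.isOpen_compl
  have hsh : ∀ z, z ∉ (pp L).lattice → z + l ∉ (pp L).lattice := by
    intro z hz h
    apply hz
    simpa using sub_mem h hl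
  obtain ⟨η, hη⟩ : ∃ η, ∀ z ∈ ((pp L).lattice : Set ℂ)ᶜ, L.zeta (z + l) - L.zeta z = η := by
    have key : ∀ z ∈ ((pp L).lattice : Set ℂ)ᶜ,
        HasDerivAt (fun z => L.zeta (z + l) - L.zeta z) 0 z := by
      intro z hz
      have h1 := (zeta_deriv L (hsh z hz)).comp_add_const z l
      have h2 := h1.sub (zeta_deriv L hz)
      have h3 := (pp L).weierstrassP_add_coe z ⟨l, hl⟩
      simp only at h3
      rw [h3, sub_self] at h2
      exact h2
    exact hopen.exists_is_const_of_deriv_eq_zero (preconn _)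
      (fun z hz => (key z hz).differentiableAt.differentiableWithinAt)
      (fun z hz => (key z hz).deriv)
  obtain ⟨c, hc⟩ : ∃ c, ∀ z ∈ ((pp L).lattice : Set ℂ)ᶜ,
      L.sigma (z + l) * Complex.exp (-η * z) / L.sigma z = c := by
    have key : ∀ z ∈ ((pp L).lattice : Set ℂ)ᶜ,
        HasDerivAt (fun z => L.sigma (z + l) * Complex.exp (-η * z) / L.sigma z) 0 z := by
      intro z hz
      have hne : L.sigma z ≠ 0 := sigma_ne L (by rw [mem_iff]; exact hz)
      have hne' : L.sigma (z + l) ≠ 0 := sigma_ne L (by rw [mem_iff]; exact hsh z hz)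
      have h1 := ((sigma_diff L) (z + l)).hasDerivAt.comp_add_const z l
      have h2 : HasDerivAt (fun z : ℂ => Complex.exp (-η * z)) (Complex.exp (-η * z) * (-η)) z := by
        simpa using ((hasDerivAt_id z).const_mul (-η)).cexp
      have h3 := (h1.mul h2).div ((sigma_diff L) z).hasDerivAt hne
      convert! h3 using 1
      simp only [Pi.mul_apply]
      generalize Complex.exp (-η * z) = E
      rw [← hη z hz]
      unfold EllLattice.zeta
      field_simp
      ring
    exact hopen.exists_is_const_of_deriv_eq_zero (preconn _)
      (fun z hz => (key z hz).differentiableAt.differentiableWithinAt)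
      (fun z hz => (key z hz).deriv)
  have main : ∀ z ∈ ((pp L).lattice : Set ℂ)ᶜ,
      L.sigma (z + l) = c * Complex.exp (η * z) * L.sigma z := by
    intro z hz
    have hne : L.sigma z ≠ 0 := sigma_ne L (by rw [mem_iff]; exact hz)
    rw [← hc z hz]
    have : Complex.exp (-η * z) * Complex.exp (η * z) = 1 := by
      rw [← Complex.exp_add]; simp
    generalize Complex.exp (-η * z) = E at *
    generalize Complex.exp (η * z) = E' at *
    field_simp
    linear_combination (-L.sigma (z + l)) * this
  refine ⟨c, η, ?_, ?_⟩
  · rintro rfl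
    have h1 : (pp L).ω₁ / 2 ∈ ((pp L).lattice : Set ℂ)ᶜ := (pp L).ω₁_div_two_notMem_lattice
    have h2 := main _ h1
    rw [zero_mul, zero_mul, sigma_eq_zero_iff, mem_iff] at h2
    exact hsh _ h1 h2
  · intro z
    by_cases hz : z ∈ (pp L).lattice
    · rw [sigma_mem L ((mem_iff _ _).mpr hz), sigma_mem L ((mem_iff _ _).mpr (add_mem hz hl))]
      simp
    · exact main z hz

end EllAux

namespace EllAux

open Filter Topology

lemma liou (L : EllLattice) (F G : ℂ → ℂ) (hF : Differentiable ℂ F) (hG : Differentiable ℂ G)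
    (hper : ∀ l, L.mem l → ∃ m : ℂ → ℂ, Differentiable ℂ m ∧ (∀ z, m z ≠ 0) ∧
      (∀ z, F (z + l) = m z * F z) ∧ (∀ z, G (z + l) = m z * G z))
    (hz : ∀ z, G z = 0 → F z = 0 ∧ deriv G z ≠ 0) : ∃ c, ∀ z, F z = c * G z := by
  classical
  set Q : ℂ → ℂ := fun z => if G z = 0 then deriv F z / deriv G z else F z / G z with hQ
  have hQd : Differentiable ℂ Q := by
    intro z0
    by_cases h0 : G z0 = 0
    · obtain ⟨hF0, hG0⟩ := hz z0 h0
      have dF : DifferentiableAt ℂ (dslope F z0) z0 :=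
        ((Complex.differentiableOn_dslope (univ_mem : Set.univ ∈ 𝓝 z0)).mpr
          hF.differentiableOn).differentiableAt univ_mem
      have dG : DifferentiableAt ℂ (dslope G z0) z0 :=
        ((Complex.differentiableOn_dslope (univ_mem : Set.univ ∈ 𝓝 z0)).mpr
          hG.differentiableOn).differentiableAt univ_mem
      have hne : dslope G z0 z0 ≠ 0 := by rwa [dslope_same]
      refine (dF.div dG hne).congr_of_eventuallyEq ?_
      filter_upwards [dG.continuousAt.eventually_ne hne] with z hzn
      rcases eq_or_ne z z0 with rfl | hzz
      · simp [hQ, h0]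
      · have hs : z - z0 ≠ 0 := sub_ne_zero.mpr hzz
        simp only [Pi.div_apply]
        rw [dslope_of_ne _ hzz, slope_def_field, h0, sub_zero] at hzn
        rw [dslope_of_ne _ hzz, dslope_of_ne _ hzz, slope_def_field, slope_def_field, h0, hF0]
        have : G z ≠ 0 := by
          intro h; rw [h] at hzn; simp at hzn
        simp only [hQ, this, if_false, sub_zero]
        field_simp
    · refine ((hF z0).div (hG z0) h0).congr_of_eventuallyEq ?_
      filter_upwards [(hG z0).continuousAt.eventually_ne h0] with z hzn
      simp [hQ, hzn]
  have hQp : ∀ l, L.mem l → ∀ z, Q (z + l) = Q z := by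
    intro l hl z
    obtain ⟨m, hm, hmn, h1, h2⟩ := hper l hl
    have hd : ∀ H : ℂ → ℂ, Differentiable ℂ H → (∀ z, H (z + l) = m z * H z) → H z = 0 →
        deriv H (z + l) = m z * deriv H z := by
      intro H hH hHp hH0
      have e : (fun z => H (z + l)) = fun z => m z * H z := funext hHp
      have a := (hH (z + l)).hasDerivAt.comp_add_const z l
      rw [e] at a
      have b := (hm z).hasDerivAt.mul (hH z).hasDerivAt
      rw [hH0] at b
      have := a.unique b
      rw [this]; ring
    have hmz := hmn z
    by_cases h0 : G z = 0
    · have hF0 := (hz z h0).1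
      have h0' : G (z + l) = 0 := by rw [h2, h0, mul_zero]
      simp only [hQ, h0, h0', if_true]
      rw [hd F hF h1 hF0, hd G hG h2 h0]
      field_simp
    · have h0' : G (z + l) ≠ 0 := by rw [h2]; exact mul_ne_zero hmz h0
      simp only [hQ, h0, h0', if_false]
      rw [h1, h2]
      field_simp
  have hb : Bornology.IsBounded (Set.range Q) := by
    have hK : IsCompact ((fun p : ℝ × ℝ => (p.1 : ℂ) * L.ω₁ + (p.2 : ℂ) * L.ω₂) ''
        (Set.Icc (0:ℝ) 1 ×ˢ Set.Icc (0:ℝ) 1)) :=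
      (isCompact_Icc.prod isCompact_Icc).image (by fun_prop)
    refine (hK.image hQd.continuous).isBounded.subset ?_
    rintro _ ⟨z, rfl⟩
    have hrep := (pp L).basis.sum_repr z
    rw [Fin.sum_univ_two, PeriodPair.basis_zero, PeriodPair.basis_one] at hrep
    set a := (pp L).basis.repr z 0
    set b := (pp L).basis.repr z 1
    refine ⟨((Int.fract a : ℝ) : ℂ) * L.ω₁ + ((Int.fract b : ℝ) : ℂ) * L.ω₂, ⟨(Int.fract a, Int.fract b),
      ⟨⟨Int.fract_nonneg _, (Int.fract_lt_one _).le⟩,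
       ⟨Int.fract_nonneg _, (Int.fract_lt_one _).le⟩⟩, rfl⟩, ?_⟩
    rw [← hQp (⌊a⌋ • L.ω₁ + ⌊b⌋ • L.ω₂) ⟨_, _, rfl⟩]
    congr 1
    rw [← hrep]
    simp only [Int.fract, zsmul_eq_mul, Complex.real_smul, pp]
    push_cast
    ring
  obtain ⟨c, hc⟩ : ∃ c, ∀ z, Q z = c := ⟨Q 0, fun z => hQd.apply_eq_apply_of_bounded hb z 0⟩
  refine ⟨c, fun z => ?_⟩
  by_cases h0 : G z = 0
  · rw [h0, (hz z h0).1, mul_zero]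
  · rw [← hc z]
    simp only [hQ, h0, if_false]
    field_simp

lemma sigma_deriv_ne (L : EllLattice) {l : ℂ} (hl : L.mem l) : deriv L.sigma l ≠ 0 := by
  obtain ⟨c, η, hc, h⟩ := quasi L hl
  have e : (fun z => L.sigma (z + l)) = fun z => c * Complex.exp (η * z) * L.sigma z := funext h
  have a := (sigma_diff L (0 + l)).hasDerivAt.comp_add_const 0 l
  rw [e] at a
  have d : DifferentiableAt ℂ (fun z => c * Complex.exp (η * z)) 0 := by fun_prop
  have b := d.hasDerivAt.mul (sigma_diff L 0).hasDerivAt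
  have h0 : L.sigma 0 = 0 := by rw [sigma_eq]; simp
  rw [h0, sigma_deriv_zero] at b
  have := a.unique b
  rw [zero_add] at this
  rw [this]
  simpa using hc

lemma mem_zero (L : EllLattice) : L.mem 0 := ⟨0, 0, by simp⟩

lemma mem_neg (L : EllLattice) {z : ℂ} : L.mem (-z) ↔ L.mem z := by
  rw [mem_iff, mem_iff, neg_mem_iff]

lemma mem_add_iff (L : EllLattice) {z l : ℂ} (hl : L.mem l) : L.mem (z + l) ↔ L.mem z := by
  rw [mem_iff] at hl
  rw [mem_iff, mem_iff]
  exact Submodule.add_mem_iff_left _ hl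

/-- Three-term relation in the form needed. -/
lemma sigA (L : EllLattice) {ξ κ κ' : ℂ} (δ : ℂ) (h1 : ¬ L.mem κ) (h2 : ¬ L.mem (ξ + κ'))
    (h3 : ¬ L.mem (ξ + κ + κ')) :
    L.sigma (ξ + κ + κ') * L.sigma (δ + κ') * L.sigma (ξ + δ) * L.sigma κ =
      - (L.sigma (ξ + δ + κ + κ') * L.sigma (δ - κ) * L.sigma ξ * L.sigma κ') +
      L.sigma (ξ + δ + κ') * L.sigma (ξ + κ) * L.sigma (κ + κ') * L.sigma δ := by
  have hd := sigma_diff L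
  set F : ℂ → ℂ := fun δ => L.sigma (ξ + κ + κ') * L.sigma (δ + κ') * L.sigma (ξ + δ) * L.sigma κ
    + L.sigma (ξ + δ + κ + κ') * L.sigma (δ - κ) * L.sigma ξ * L.sigma κ' with hF
  set G : ℂ → ℂ := fun δ => L.sigma (ξ + δ + κ') * L.sigma δ with hG
  have hper : ∀ l, L.mem l → ∃ m : ℂ → ℂ, Differentiable ℂ m ∧ (∀ z, m z ≠ 0) ∧
      (∀ z, F (z + l) = m z * F z) ∧ (∀ z, G (z + l) = m z * G z) := by
    intro l hl
    obtain ⟨c, η, hc, h⟩ := quasi L hl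
    refine ⟨fun z => c ^ 2 * Complex.exp (η * (2 * z + ξ + κ')), by fun_prop,
      fun z => mul_ne_zero (pow_ne_zero _ hc) (Complex.exp_ne_zero _), ?_, ?_⟩
    · intro z
      have e1 := h (z + κ')
      rw [show z + κ' + l = z + l + κ' by ring] at e1
      have e2 := h (ξ + z)
      rw [show ξ + z + l = ξ + (z + l) by ring] at e2
      have e3 := h (ξ + z + κ + κ')
      rw [show (ξ + z + κ + κ') + l = ξ + (z + l) + κ + κ' by ring] at e3
      have e4 := h (z - κ)
      rw [show (z - κ) + l = z + l - κ by ring] at e4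
      simp only [hF]
      rw [e1, e2, e3, e4]
      have x1 : Complex.exp (η * (2 * z + ξ + κ')) =
          Complex.exp (η * (z + κ')) * Complex.exp (η * (ξ + z)) := by
        rw [← Complex.exp_add]; ring_nf
      have x2 : Complex.exp (η * (2 * z + ξ + κ')) =
          Complex.exp (η * (ξ + z + κ + κ')) * Complex.exp (η * (z - κ)) := by
        rw [← Complex.exp_add]; ring_nf
      generalize Complex.exp (η * (2 * z + ξ + κ')) = X at x1 x2 ⊢
      generalize Complex.exp (η * (z + κ')) = E1 at x1 x2 ⊢
      generalize Complex.exp (η * (ξ + z)) = E2 at x1 x2 ⊢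
      generalize Complex.exp (η * (ξ + z + κ + κ')) = E3 at x1 x2 ⊢
      generalize Complex.exp (η * (z - κ)) = E4 at x1 x2 ⊢
      linear_combination (-(c^2 * L.sigma (ξ + κ + κ') * L.sigma (z + κ') * L.sigma (ξ + z) * L.sigma κ)) * x1 - (c^2 * L.sigma (ξ + z + κ + κ') * L.sigma (z - κ) * L.sigma ξ * L.sigma κ') * x2
    · intro z
      have e3 := h (ξ + z + κ')
      rw [show (ξ + z + κ') + l = ξ + (z + l) + κ' by ring] at e3
      simp only [hG]
      rw [e3, h z]
      have x1 : Complex.exp (η * (2 * z + ξ + κ')) =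
          Complex.exp (η * (ξ + z + κ')) * Complex.exp (η * z) := by
        rw [← Complex.exp_add]; ring_nf
      rw [x1]
      ring
  have s0 : L.sigma 0 = 0 := sigma_mem L (mem_zero L)
  have hFz : ∀ z l, L.mem l → F z = 0 → F (z + l) = 0 := by
    intro z l hl h
    obtain ⟨m, -, -, hm, -⟩ := hper l hl
    rw [hm, h, mul_zero]
  have hFdiff : Differentiable ℂ F := by simp only [hF]; fun_prop
  have hGdiff : Differentiable ℂ G := by simp only [hG]; fun_prop
  obtain ⟨c, hc⟩ := liou L F G hFdiff hGdiff hper (by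
    intro z hz
    have a1 : HasDerivAt (fun z => L.sigma (ξ + z + κ')) (deriv L.sigma (ξ + z + κ')) z := by
      have := (hd (ξ + z + κ')).hasDerivAt.comp z
        (((hasDerivAt_id z).const_add ξ).add_const κ')
      simpa [Function.comp_def] using this
    have hder := (a1.mul (hd z).hasDerivAt).deriv
    have hder' : deriv G z = _ := hder
    rw [hder']
    simp only [hG, mul_eq_zero, sigma_eq_zero_iff] at hz
    rcases hz with hz | hz
    · have hzz : ¬ L.mem z := by
        intro hm
        apply h2
        rw [← mem_add_iff L hm]
        rwa [show ξ + κ' + z = ξ + z + κ' by ring]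
      constructor
      · have := hFz (-ξ - κ') _ hz (by
          simp only [hF]
          rw [show -ξ - κ' + κ' = -ξ by ring, show ξ + (-ξ - κ') = -κ' by ring,
            show -κ' + κ + κ' = κ by ring, show -ξ - κ' - κ = -(ξ + κ + κ') by ring,
            sigma_neg, sigma_neg, sigma_neg]
          ring)
        rwa [show -ξ - κ' + (ξ + z + κ') = z by ring] at this
      · rw [sigma_mem L hz, zero_mul, add_zero]
        exact mul_ne_zero (sigma_deriv_ne L hz) (sigma_ne L hzz)
    · constructor
      · have := hFz 0 _ hz (by
          simp only [hF]
          rw [zero_add, add_zero, zero_sub, sigma_neg]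
          ring)
        rwa [zero_add] at this
      · rw [sigma_mem L hz, mul_zero, zero_add]
        refine mul_ne_zero (sigma_ne L ?_) (sigma_deriv_ne L hz)
        rw [show ξ + z + κ' = ξ + κ' + z by ring, mem_add_iff L hz]
        exact h2)
  have hcv : c = L.sigma (ξ + κ) * L.sigma (κ + κ') := by
    have := hc κ
    simp only [hF, hG] at this
    rw [sub_self, s0] at this
    have n1 := sigma_ne L h1
    have n3 := sigma_ne L h3
    have n4 : L.sigma (ξ + κ + κ') * L.sigma κ ≠ 0 := mul_ne_zero n3 n1
    apply mul_right_cancel₀ n4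
    linear_combination -this
  have := hc δ
  simp only [hF, hG, hcv] at this
  linear_combination this

lemma sigB (L : EllLattice) {ξ κ : ℂ} (δ : ℂ) (h1 : ¬ L.mem κ) (h2 : ¬ L.mem ξ)
    (h3 : ¬ L.mem (ξ + κ)) :
    deriv L.sigma (ξ + κ) * L.sigma δ * L.sigma (ξ + δ) * L.sigma κ +
      L.sigma (ξ + κ) * deriv L.sigma δ * L.sigma (ξ + δ) * L.sigma κ =
      - (L.sigma (ξ + δ + κ) * L.sigma (δ - κ) * L.sigma ξ) +
      deriv L.sigma (ξ + δ) * L.sigma (ξ + κ) * L.sigma κ * L.sigma δ +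
      L.sigma (ξ + δ) * L.sigma (ξ + κ) * deriv L.sigma κ * L.sigma δ := by
  have hd := sigma_diff L
  have s0 : L.sigma 0 = 0 := sigma_mem L (mem_zero L)
  have sh : ∀ a : ℂ, HasDerivAt (fun t => L.sigma (a + t)) (deriv L.sigma a) 0 := by
    intro a
    have := (hd (a + 0)).hasDerivAt.comp_const_add a 0
    simpa using this
  have hl := (((sh (ξ + κ)).mul (sh δ)).mul_const (L.sigma (ξ + δ))).mul_const (L.sigma κ)
  have s1 := (hd 0).hasDerivAt
  rw [sigma_deriv_zero] at s1
  have hr1 := (((sh (ξ + δ + κ)).mul_const (L.sigma (δ - κ))).mul_const (L.sigma ξ)).mul s1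
  have hr2 := (((sh (ξ + δ)).mul_const (L.sigma (ξ + κ))).mul (sh κ)).mul_const (L.sigma δ)
  have hr := hr1.neg.add hr2
  have hopen : ∀ a : ℂ, ¬ L.mem a → ∀ᶠ t in 𝓝 (0:ℂ), ¬ L.mem (a + t) := by
    intro a ha
    have hc : ContinuousAt (fun t => L.sigma (a + t)) 0 := (sh a).continuousAt
    have := hc.eventually_ne (by simpa using sigma_ne L ha : L.sigma (a + 0) ≠ 0)
    filter_upwards [this] with t ht hm
    exact ht (sigma_mem L hm)
  have hev := hl.congr_of_eventuallyEq (f₁ := _) (by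
    show _ =ᶠ[𝓝 0] _
    filter_upwards [hopen ξ h2, hopen _ h3] with t ht1 ht2
    exact (sigA L δ h1 ht1 ht2).symm)
  have := hev.unique hr
  simp only [add_zero, s0, mul_zero, mul_one, zero_add] at this
  linear_combination this

/-- addition formula for Phi -/
lemma PhiA (L : EllLattice) {ξ κ κ' δ : ℂ} (h1 : ¬ L.mem κ) (h1' : ¬ L.mem κ')
    (h2 : ¬ L.mem (ξ + κ')) (h3 : ¬ L.mem (ξ + κ + κ')) (h4 : ¬ L.mem ξ) (h5 : ¬ L.mem δ)
    (h6 : ¬ L.mem (κ + κ')) (h7 : ¬ L.mem (ξ + δ)) :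
    L.Phi ξ (κ + κ') * L.Phi δ κ' =
      L.Phi (ξ + δ) (κ + κ') * L.Phi δ (-κ) + L.Phi (ξ + δ) κ' * L.Phi ξ κ := by
  have := sigA L δ h1 h2 h3
  unfold EllLattice.Phi
  rw [sigma_neg, ← add_assoc, ← add_assoc, ← sub_eq_add_neg]
  have := sigma_ne L h1
  have := sigma_ne L h1'
  have := sigma_ne L h4
  have := sigma_ne L h5
  have := sigma_ne L h6
  have := sigma_ne L h7
  field_simp
  linear_combination sigA L δ h1 h2 h3

lemma PhiB (L : EllLattice) {ξ κ δ : ℂ} (h1 : ¬ L.mem κ) (h2 : ¬ L.mem ξ)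
    (h3 : ¬ L.mem (ξ + κ)) (h5 : ¬ L.mem δ) (h7 : ¬ L.mem (ξ + δ)) :
    L.Phi (ξ + δ) κ * L.Phi δ (-κ) =
      L.Phi ξ κ * (L.zeta (ξ + κ) - L.zeta κ - (L.zeta (ξ + δ) - L.zeta δ)) := by
  unfold EllLattice.Phi EllLattice.zeta
  rw [sigma_neg, ← sub_eq_add_neg]
  have := sigma_ne L h1
  have := sigma_ne L h2
  have := sigma_ne L h3
  have := sigma_ne L h5
  have := sigma_ne L h7
  field_simp
  linear_combination -sigB L δ h1 h2 h3

end EllAux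

namespace EllAux

lemma core (φ v w c : ℤ → ℤ → ℤ → ℂ)
    (h1 : ∀ n m h, φ (n + 1) m h = v n m h - (w (n + 1) m h + c n m h) * φ n m h)
    (h2 : ∀ n m h, φ n (m + 1) h = v n m h - (w n (m + 1) h + c n m h) * φ n m h)
    (h3 : ∀ n m h, φ n m (h + 1) = v n m h - (w n m (h + 1) + c n m h) * φ n m h)
    (n m h : ℤ) (hne : φ n m h ≠ 0) :
    (w n (m + 1) (h + 1) - w (n + 1) m (h + 1)) * (w n m (h + 1) - w (n + 1) m h) =
      (w n (m + 1) (h + 1) - w (n + 1) (m + 1) h) * (w n (m + 1) h - w (n + 1) m h) := by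
  have a1 := h1 n m h
  have a2 := h2 n m h
  have a3 := h3 n m h
  have b12 := h2 (n + 1) m h
  have b13 := h3 (n + 1) m h
  have b21 := h1 n (m + 1) h
  have b23 := h3 n (m + 1) h
  have b31 := h1 n m (h + 1)
  have b32 := h2 n m (h + 1)
  have e : (w (n + 1) m (h + 1) - w (n + 1) (m + 1) h) * φ (n + 1) m h
      + (w (n + 1) (m + 1) h - w n (m + 1) (h + 1)) * φ n (m + 1) h
      + (w n (m + 1) (h + 1) - w (n + 1) m (h + 1)) * φ n m (h + 1) = 0 := by
    linear_combination b13 - b12 + b21 - b23 + b32 - b31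
  rw [a1, a2, a3] at e
  apply mul_right_cancel₀ hne
  linear_combination -e

lemma step {N N' : ℕ} (M M' : Matrix (Fin N) (Fin N') ℂ) (C : Matrix (Fin N') (Fin N) ℂ)
    (r r' X : Fin N → ℂ) (s' : Fin N' → ℂ) (G : ℂ)
    (hM : ∀ i j, M' i j = M i j - r i * s' j) (hr : ∀ i, r' i = (X i - G) * r i)
    (hU : IsUnit (1 + M * C).det) (hU' : IsUnit (1 + M' * C).det) :
    (1 + M' * C)⁻¹ *ᵥ r' = (1 + M * C)⁻¹ *ᵥ (fun i => X i * r i)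
      - (G - s' ⬝ᵥ (C *ᵥ ((1 + M' * C)⁻¹ *ᵥ r'))) • ((1 + M * C)⁻¹ *ᵥ r) := by
  set u' := (1 + M' * C)⁻¹ *ᵥ r' with hu'
  have k1 : (1 + M' * C) *ᵥ u' = r' := by
    rw [hu', mulVec_mulVec, mul_nonsing_inv _ hU', one_mulVec]
  have k2 : M' = M - vecMulVec r s' := by
    ext i j; simp [hM, vecMulVec_apply]
  have k3 : (1 + M * C) *ᵥ u' = (fun i => X i * r i) - (G - s' ⬝ᵥ (C *ᵥ u')) • r := by
    rw [k2] at k1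
    have : (1 + M * C) *ᵥ u' = r' + vecMulVec r s' *ᵥ (C *ᵥ u') := by
      rw [← k1, Matrix.sub_mul, add_mulVec, add_mulVec, sub_mulVec, ← mulVec_mulVec, ← mulVec_mulVec]
      abel
    rw [this]
    ext i
    have : (vecMulVec r s' *ᵥ (C *ᵥ u')) i = r i * (s' ⬝ᵥ (C *ᵥ u')) := by
      simp only [mulVec, dotProduct, vecMulVec_apply, Finset.mul_sum, mul_assoc]
    simp only [Pi.add_apply, Pi.sub_apply, Pi.smul_apply, smul_eq_mul, hr, this]
    ring
  rw [← mulVec_smul, ← mulVec_sub, ← k3, mulVec_mulVec, nonsing_inv_mul _ hU, one_mulVec]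

/-- undressed plane wave factors -/
def fA (L : EllLattice) (d e l κ : ℂ) (n m h : ℤ) : ℂ :=
  L.Phi d (-κ) ^ n * L.Phi e (-κ) ^ m * L.Phi l (-κ) ^ h

def fB (L : EllLattice) (d e l κ : ℂ) (n m h : ℤ) : ℂ :=
  L.Phi d κ ^ (-n) * L.Phi e κ ^ (-m) * L.Phi l κ ^ (-h)

lemma expA (L : EllLattice) (d κ : ℂ) :
    Complex.exp (-(L.zeta d) * κ) * L.Psi d (-κ) = L.Phi d (-κ) := by
  unfold EllLattice.Psi
  rw [mul_left_comm, ← Complex.exp_add]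
  simp

lemma expB (L : EllLattice) (d κ : ℂ) :
    Complex.exp (L.zeta d * κ) * L.Psi d κ = L.Phi d κ := by
  unfold EllLattice.Psi
  rw [mul_left_comm, ← Complex.exp_add]
  simp

variable {N N' : ℕ} (D : KPData N N')

lemma r_eq (n m h : ℤ) (i : Fin N) : D.r n m h i =
    D.ρ0 i * (fA D.L D.del D.eps D.lam (D.κ i) n m h * D.L.Phi (D.xi n m h) (D.κ i)) := by
  unfold KPData.r KPData.ρ fA
  rw [expA, expA, expA, ← expB D.L (D.xi n m h) (D.κ i)]
  ring

lemma s_eq (n m h : ℤ) (j : Fin N') : D.s n m h j =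
    D.ν0 j * (fB D.L D.del D.eps D.lam (D.κ' j) n m h * D.L.Phi (D.xi n m h) (D.κ' j)) := by
  unfold KPData.s KPData.ν fB
  rw [expB, expB, expB, ← expB D.L (D.xi n m h) (D.κ' j)]
  ring

lemma M_eq (n m h : ℤ) (i : Fin N) (j : Fin N') : D.M n m h i j =
    D.ρ0 i * D.ν0 j * (fA D.L D.del D.eps D.lam (D.κ i) n m h *
      fB D.L D.del D.eps D.lam (D.κ' j) n m h * D.L.Phi (D.xi n m h) (D.κ i + D.κ' j)) := by
  unfold KPData.M KPData.ρ KPData.ν fA fB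
  rw [Matrix.of_apply, expA, expA, expA, expB, expB, expB,
    ← expB D.L (D.xi n m h) (D.κ i + D.κ' j), mul_add, Complex.exp_add]
  ring

lemma Phi_ne (L : EllLattice) {ξ κ : ℂ} (h1 : ¬ L.mem ξ) (h2 : ¬ L.mem κ)
    (h3 : ¬ L.mem (ξ + κ)) : L.Phi ξ κ ≠ 0 :=
  div_ne_zero (sigma_ne L h3) (mul_ne_zero (sigma_ne L h1) (sigma_ne L h2))

lemma g0 {D : KPData N N'} (hg : D.Generic ![]) (c0 cn cm ch : ℤ) (hc : ¬ (c0 = 0 ∧ cn = 0 ∧ cm = 0 ∧ ch = 0)) :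
    ¬ D.L.mem (c0 • D.xi0 + cn • D.del + cm • D.eps + ch • D.lam) := by
  have := hg c0 cn cm ch 0 0 0 (by tauto)
  simpa using this

lemma gk {D : KPData N N'} (hg : D.Generic ![]) (c0 cn cm ch k : ℤ) (i : Fin N) (hk : k ≠ 0) :
    ¬ D.L.mem (c0 • D.xi0 + cn • D.del + cm • D.eps + ch • D.lam + k • D.κ i) := by
  have := hg c0 cn cm ch (Pi.single i k) 0 0 (by simp [hk])
  simpa [Pi.single_apply] using this

lemma gk' {D : KPData N N'} (hg : D.Generic ![]) (c0 cn cm ch k : ℤ) (i : Fin N') (hk : k ≠ 0) :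
    ¬ D.L.mem (c0 • D.xi0 + cn • D.del + cm • D.eps + ch • D.lam + k • D.κ' i) := by
  have := hg c0 cn cm ch 0 (Pi.single i k) 0 (by simp [hk])
  simpa [Pi.single_apply] using this

lemma gkk {D : KPData N N'} (hg : D.Generic ![]) (c0 cn cm ch : ℤ) (i : Fin N) (j : Fin N') :
    ¬ D.L.mem (c0 • D.xi0 + cn • D.del + cm • D.eps + ch • D.lam + D.κ i + D.κ' j) := by
  have := hg c0 cn cm ch (Pi.single i 1) (Pi.single j 1) 0 (by simp)
  simpa [Pi.single_apply] using this

end EllAux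

namespace EllAux
variable {N N' : ℕ}

def Ok (D : KPData N N') (κ : ℂ) : Prop :=
  (∀ n m h : ℤ, ¬ D.L.mem (D.xi n m h + κ)) ∧
  (∀ n m h : ℤ, ¬ D.L.mem (n • D.del + m • D.eps + h • D.lam + (-κ)))

lemma xi_ok {D : KPData N N'} (hg : D.Generic ![]) (n m h : ℤ) : ¬ D.L.mem (D.xi n m h) := by
  simpa [KPData.xi] using g0 hg 1 n m h (by simp)

lemma del_ok {D : KPData N N'} (hg : D.Generic ![]) : ¬ D.L.mem D.del := by
  simpa using g0 hg 0 1 0 0 (by simp)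
lemma eps_ok {D : KPData N N'} (hg : D.Generic ![]) : ¬ D.L.mem D.eps := by
  simpa using g0 hg 0 0 1 0 (by simp)
lemma lam_ok {D : KPData N N'} (hg : D.Generic ![]) : ¬ D.L.mem D.lam := by
  simpa using g0 hg 0 0 0 1 (by simp)

lemma ok_k {D : KPData N N'} (hg : D.Generic ![]) (i : Fin N) : Ok D (D.κ i) := by
  refine ⟨fun n m h => ?_, fun n m h => ?_⟩
  · simpa [KPData.xi] using gk hg 1 n m h 1 i (by simp)
  · simpa using gk hg 0 n m h (-1) i (by simp)

lemma ok_xi {D : KPData N N'} (hg : D.Generic ![]) : Ok D D.xi0 := by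
  refine ⟨fun n m h => ?_, fun n m h => ?_⟩
  · have := g0 hg 2 n m h (by simp)
    rw [show D.xi n m h + D.xi0 = (2:ℤ) • D.xi0 + n • D.del + m • D.eps + h • D.lam by
      unfold KPData.xi; rw [two_zsmul]; ring]
    exact this
  · have := g0 hg (-1) n m h (by simp)
    rw [show n • D.del + m • D.eps + h • D.lam + -D.xi0 =
      (-1:ℤ) • D.xi0 + n • D.del + m • D.eps + h • D.lam by rw [neg_one_zsmul]; ring]
    exact this

lemma xi1 (D : KPData N N') (n m h : ℤ) : D.xi (n + 1) m h = D.xi n m h + D.del := by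
  unfold KPData.xi; rw [add_smul, one_smul]; ring
lemma xi2 (D : KPData N N') (n m h : ℤ) : D.xi n (m + 1) h = D.xi n m h + D.eps := by
  unfold KPData.xi; rw [add_smul, one_smul]; ring
lemma xi3 (D : KPData N N') (n m h : ℤ) : D.xi n m (h + 1) = D.xi n m h + D.lam := by
  unfold KPData.xi; rw [add_smul, one_smul]; ring

section
variable {D : KPData N N'} {κ : ℂ}

lemma Ok.neg (hk : Ok D κ) : ¬ D.L.mem (-κ) := by simpa using hk.2 0 0 0
lemma Ok.pos (hk : Ok D κ) : ¬ D.L.mem κ := fun h => hk.neg ((mem_neg D.L).2 h)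

lemma pd (hg : D.Generic ![]) (hk : Ok D κ) : D.L.Phi D.del (-κ) ≠ 0 :=
  Phi_ne _ (del_ok hg) hk.neg (by simpa using hk.2 1 0 0)
lemma pe (hg : D.Generic ![]) (hk : Ok D κ) : D.L.Phi D.eps (-κ) ≠ 0 :=
  Phi_ne _ (eps_ok hg) hk.neg (by simpa using hk.2 0 1 0)
lemma pl (hg : D.Generic ![]) (hk : Ok D κ) : D.L.Phi D.lam (-κ) ≠ 0 :=
  Phi_ne _ (lam_ok hg) hk.neg (by simpa using hk.2 0 0 1)

lemma fA_ne (hg : D.Generic ![]) (hk : Ok D κ) (n m h : ℤ) :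
    fA D.L D.del D.eps D.lam κ n m h ≠ 0 :=
  mul_ne_zero (mul_ne_zero (zpow_ne_zero _ (pd hg hk)) (zpow_ne_zero _ (pe hg hk)))
    (zpow_ne_zero _ (pl hg hk))

lemma fA1 (hg : D.Generic ![]) (hk : Ok D κ) (n m h : ℤ) :
    fA D.L D.del D.eps D.lam κ (n + 1) m h =
      fA D.L D.del D.eps D.lam κ n m h * D.L.Phi D.del (-κ) := by
  unfold fA; rw [zpow_add_one₀ (pd hg hk)]; ring
lemma fA2 (hg : D.Generic ![]) (hk : Ok D κ) (n m h : ℤ) :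
    fA D.L D.del D.eps D.lam κ n (m + 1) h =
      fA D.L D.del D.eps D.lam κ n m h * D.L.Phi D.eps (-κ) := by
  unfold fA; rw [zpow_add_one₀ (pe hg hk)]; ring
lemma fA3 (hg : D.Generic ![]) (hk : Ok D κ) (n m h : ℤ) :
    fA D.L D.del D.eps D.lam κ n m (h + 1) =
      fA D.L D.del D.eps D.lam κ n m h * D.L.Phi D.lam (-κ) := by
  unfold fA; rw [zpow_add_one₀ (pl hg hk)]; ring

lemma zneg {x : ℂ} (hx : x ≠ 0) (n : ℤ) : x ^ (-n) = x ^ (-(n + 1)) * x := by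
  rw [← zpow_add_one₀ hx]; congr 1; ring

lemma k'_ok (hg : D.Generic ![]) (j : Fin N') : ¬ D.L.mem (D.κ' j) := by
  simpa using gk' hg 0 0 0 0 1 j (by simp)
lemma pd' (hg : D.Generic ![]) (j : Fin N') : D.L.Phi D.del (D.κ' j) ≠ 0 :=
  Phi_ne _ (del_ok hg) (k'_ok hg j) (by simpa using gk' hg 0 1 0 0 1 j (by simp))
lemma pe' (hg : D.Generic ![]) (j : Fin N') : D.L.Phi D.eps (D.κ' j) ≠ 0 :=
  Phi_ne _ (eps_ok hg) (k'_ok hg j) (by simpa using gk' hg 0 0 1 0 1 j (by simp))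
lemma pl' (hg : D.Generic ![]) (j : Fin N') : D.L.Phi D.lam (D.κ' j) ≠ 0 :=
  Phi_ne _ (lam_ok hg) (k'_ok hg j) (by simpa using gk' hg 0 0 0 1 1 j (by simp))

lemma fB1 (hg : D.Generic ![]) (j : Fin N') (n m h : ℤ) :
    fB D.L D.del D.eps D.lam (D.κ' j) n m h =
      fB D.L D.del D.eps D.lam (D.κ' j) (n + 1) m h * D.L.Phi D.del (D.κ' j) := by
  unfold fB; rw [zneg (pd' hg j) n]; ring
lemma fB2 (hg : D.Generic ![]) (j : Fin N') (n m h : ℤ) :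
    fB D.L D.del D.eps D.lam (D.κ' j) n m h =
      fB D.L D.del D.eps D.lam (D.κ' j) n (m + 1) h * D.L.Phi D.eps (D.κ' j) := by
  unfold fB; rw [zneg (pe' hg j) m]; ring
lemma fB3 (hg : D.Generic ![]) (j : Fin N') (n m h : ℤ) :
    fB D.L D.del D.eps D.lam (D.κ' j) n m h =
      fB D.L D.del D.eps D.lam (D.κ' j) n m (h + 1) * D.L.Phi D.lam (D.κ' j) := by
  unfold fB; rw [zneg (pl' hg j) h]; ring

/-- scalar wave -/
def fR (D : KPData N N') (κ : ℂ) (n m h : ℤ) : ℂ :=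
  fA D.L D.del D.eps D.lam κ n m h * D.L.Phi (D.xi n m h) κ

lemma fR_ne (hg : D.Generic ![]) (hk : Ok D κ) (n m h : ℤ) : fR D κ n m h ≠ 0 :=
  mul_ne_zero (fA_ne hg hk n m h) (Phi_ne _ (xi_ok hg n m h) hk.pos (hk.1 n m h))

def X (D : KPData N N') (κ : ℂ) (n m h : ℤ) : ℂ := D.L.zeta (D.xi n m h + κ) - D.L.zeta κ

lemma fR1 (hg : D.Generic ![]) (hk : Ok D κ) (n m h : ℤ) : fR D κ (n + 1) m h =
    (X D κ n m h - (D.L.zeta (D.xi (n + 1) m h) - D.L.zeta D.del)) * fR D κ n m h := by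
  have h7 := xi_ok hg (n + 1) m h
  unfold fR X
  rw [fA1 hg hk]
  rw [xi1] at h7 ⊢
  linear_combination (fA D.L D.del D.eps D.lam κ n m h) *
    PhiB D.L hk.pos (xi_ok hg n m h) (hk.1 n m h) (del_ok hg) h7
lemma fR2 (hg : D.Generic ![]) (hk : Ok D κ) (n m h : ℤ) : fR D κ n (m + 1) h =
    (X D κ n m h - (D.L.zeta (D.xi n (m + 1) h) - D.L.zeta D.eps)) * fR D κ n m h := by
  have h7 := xi_ok hg n (m + 1) h
  unfold fR X
  rw [fA2 hg hk]
  rw [xi2] at h7 ⊢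
  linear_combination (fA D.L D.del D.eps D.lam κ n m h) *
    PhiB D.L hk.pos (xi_ok hg n m h) (hk.1 n m h) (eps_ok hg) h7
lemma fR3 (hg : D.Generic ![]) (hk : Ok D κ) (n m h : ℤ) : fR D κ n m (h + 1) =
    (X D κ n m h - (D.L.zeta (D.xi n m (h + 1)) - D.L.zeta D.lam)) * fR D κ n m h := by
  have h7 := xi_ok hg n m (h + 1)
  unfold fR X
  rw [fA3 hg hk]
  rw [xi3] at h7 ⊢
  linear_combination (fA D.L D.del D.eps D.lam κ n m h) *
    PhiB D.L hk.pos (xi_ok hg n m h) (hk.1 n m h) (lam_ok hg) h7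

lemma PhiA' (hg : D.Generic ![]) (i : Fin N) (j : Fin N') (n m h : ℤ) {d : ℂ}
    (h5 : ¬ D.L.mem d) (h7 : ¬ D.L.mem (D.xi n m h + d)) :
    D.L.Phi (D.xi n m h) (D.κ i + D.κ' j) * D.L.Phi d (D.κ' j) =
      D.L.Phi (D.xi n m h + d) (D.κ i + D.κ' j) * D.L.Phi d (-D.κ i)
        + D.L.Phi (D.xi n m h + d) (D.κ' j) * D.L.Phi (D.xi n m h) (D.κ i) := by
  refine PhiA D.L (ok_k hg i).pos (k'_ok hg j) ?_ ?_ (xi_ok hg n m h) h5 ?_ h7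
  · simpa [KPData.xi] using gk' hg 1 n m h 1 j (by simp)
  · simpa [KPData.xi] using gkk hg 1 n m h i j
  · simpa using gkk hg 0 0 0 0 i j

lemma M1 (hg : D.Generic ![]) (n m h : ℤ) (i : Fin N) (j : Fin N') :
    D.M (n + 1) m h i j = D.M n m h i j - D.r n m h i * D.s (n + 1) m h j := by
  have h7 := xi_ok hg (n + 1) m h
  rw [M_eq, M_eq, r_eq, s_eq, fA1 hg (ok_k hg i), fB1 hg j n m h]
  rw [xi1] at h7 ⊢
  linear_combination -(D.ρ0 i * D.ν0 j * fA D.L D.del D.eps D.lam (D.κ i) n m h *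
    fB D.L D.del D.eps D.lam (D.κ' j) (n + 1) m h) * PhiA' hg i j n m h (del_ok hg) h7
lemma M2 (hg : D.Generic ![]) (n m h : ℤ) (i : Fin N) (j : Fin N') :
    D.M n (m + 1) h i j = D.M n m h i j - D.r n m h i * D.s n (m + 1) h j := by
  have h7 := xi_ok hg n (m + 1) h
  rw [M_eq, M_eq, r_eq, s_eq, fA2 hg (ok_k hg i), fB2 hg j n m h]
  rw [xi2] at h7 ⊢
  linear_combination -(D.ρ0 i * D.ν0 j * fA D.L D.del D.eps D.lam (D.κ i) n m h *
    fB D.L D.del D.eps D.lam (D.κ' j) n (m + 1) h) * PhiA' hg i j n m h (eps_ok hg) h7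
lemma M3 (hg : D.Generic ![]) (n m h : ℤ) (i : Fin N) (j : Fin N') :
    D.M n m (h + 1) i j = D.M n m h i j - D.r n m h i * D.s n m (h + 1) j := by
  have h7 := xi_ok hg n m (h + 1)
  rw [M_eq, M_eq, r_eq, s_eq, fA3 hg (ok_k hg i), fB3 hg j n m h]
  rw [xi3] at h7 ⊢
  linear_combination -(D.ρ0 i * D.ν0 j * fA D.L D.del D.eps D.lam (D.κ i) n m h *
    fB D.L D.del D.eps D.lam (D.κ' j) n m (h + 1)) * PhiA' hg i j n m h (lam_ok hg) h7

lemma r_fR (n m h : ℤ) (i : Fin N) : D.r n m h i = D.ρ0 i * fR D (D.κ i) n m h := r_eq D n m h i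

def vv (D : KPData N N') (n m h : ℤ) : Fin N → ℂ :=
  (1 + D.M n m h * D.C)⁻¹ *ᵥ (fun i => X D (D.κ i) n m h * D.r n m h i)

def cc (D : KPData N N') (n m h : ℤ) : ℂ :=
  n * D.L.zeta D.del + m * D.L.zeta D.eps + h * D.L.zeta D.lam

lemma u1 (hg : D.Generic ![]) (hU : ∀ n m h : ℤ, IsUnit ((1 + D.M n m h * D.C).det))
    (n m h : ℤ) (i : Fin N) : D.u0 (n + 1) m h i =
      vv D n m h i - (D.w (n + 1) m h + cc D n m h) * D.u0 n m h i := by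
  have := step (D.M n m h) (D.M (n + 1) m h) D.C (D.r n m h) (D.r (n + 1) m h)
    (fun i => X D (D.κ i) n m h) (D.s (n + 1) m h)
    (D.L.zeta (D.xi (n + 1) m h) - D.L.zeta D.del) (M1 hg n m h)
    (fun i => by rw [r_fR, r_fR, fR1 hg (ok_k hg i)]; ring) (hU _ _ _) (hU _ _ _)
  have := congrFun this i
  unfold KPData.u0 vv
  rw [this]
  simp only [Pi.sub_apply, Pi.smul_apply, smul_eq_mul, KPData.w, KPData.w0, cc, zsmul_eq_mul]
  push_cast
  ring
lemma u2 (hg : D.Generic ![]) (hU : ∀ n m h : ℤ, IsUnit ((1 + D.M n m h * D.C).det))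
    (n m h : ℤ) (i : Fin N) : D.u0 n (m + 1) h i =
      vv D n m h i - (D.w n (m + 1) h + cc D n m h) * D.u0 n m h i := by
  have := step (D.M n m h) (D.M n (m + 1) h) D.C (D.r n m h) (D.r n (m + 1) h)
    (fun i => X D (D.κ i) n m h) (D.s n (m + 1) h)
    (D.L.zeta (D.xi n (m + 1) h) - D.L.zeta D.eps) (M2 hg n m h)
    (fun i => by rw [r_fR, r_fR, fR2 hg (ok_k hg i)]; ring) (hU _ _ _) (hU _ _ _)
  have := congrFun this i
  unfold KPData.u0 vv
  rw [this]
  simp only [Pi.sub_apply, Pi.smul_apply, smul_eq_mul, KPData.w, KPData.w0, cc, zsmul_eq_mul]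
  push_cast
  ring
lemma u3 (hg : D.Generic ![]) (hU : ∀ n m h : ℤ, IsUnit ((1 + D.M n m h * D.C).det))
    (n m h : ℤ) (i : Fin N) : D.u0 n m (h + 1) i =
      vv D n m h i - (D.w n m (h + 1) + cc D n m h) * D.u0 n m h i := by
  have := step (D.M n m h) (D.M n m (h + 1)) D.C (D.r n m h) (D.r n m (h + 1))
    (fun i => X D (D.κ i) n m h) (D.s n m (h + 1))
    (D.L.zeta (D.xi n m (h + 1)) - D.L.zeta D.lam) (M3 hg n m h)
    (fun i => by rw [r_fR, r_fR, fR3 hg (ok_k hg i)]; ring) (hU _ _ _) (hU _ _ _)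
  have := congrFun this i
  unfold KPData.u0 vv
  rw [this]
  simp only [Pi.sub_apply, Pi.smul_apply, smul_eq_mul, KPData.w, KPData.w0, cc, zsmul_eq_mul]
  push_cast
  ring

end
end EllAux


/-- Elliptic (N,N′)-soliton solution of the lattice (potential) KP equation:
`(ŵ̄ − w̃̄)(w̄ − w̃) = (ŵ̄ − ŵ̃)(ŵ − w̃)`. -/
theorem elliptic_soliton_lattice_KP {N N' : ℕ} (D : KPData N N')
    (hρ0 : ∀ i, D.ρ0 i ≠ 0) (hν0 : ∀ j, D.ν0 j ≠ 0)
    (hgen : D.Generic ![])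
    (hInv : ∀ n m h : ℤ, IsUnit ((1 + D.M n m h * D.C).det)) :
    ∀ n m h : ℤ,
      (D.w n (m + 1) (h + 1) - D.w (n + 1) m (h + 1)) *
          (D.w n m (h + 1) - D.w (n + 1) m h) =
        (D.w n (m + 1) (h + 1) - D.w (n + 1) (m + 1) h) *
          (D.w n (m + 1) h - D.w (n + 1) m h) := by
  intro n m h
  rcases Nat.eq_zero_or_pos N with hN | hN
  · subst hN
    have hw : ∀ n m h, D.w0 n m h = 0 := by
      intro n m h
      unfold KPData.w0
      simp [Matrix.mulVec, dotProduct]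
    have hk := EllAux.ok_xi hgen
    refine EllAux.core (EllAux.fR D D.xi0)
      (fun n m h => EllAux.X D D.xi0 n m h * EllAux.fR D D.xi0 n m h) D.w (EllAux.cc D)
      ?_ ?_ ?_ n m h (EllAux.fR_ne hgen hk n m h)
    · intro n m h
      rw [EllAux.fR1 hgen hk]
      simp only [KPData.w, hw, EllAux.cc, zsmul_eq_mul]
      push_cast
      ring
    · intro n m h
      rw [EllAux.fR2 hgen hk]
      simp only [KPData.w, hw, EllAux.cc, zsmul_eq_mul]
      push_cast
      ring
    · intro n m h
      rw [EllAux.fR3 hgen hk]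
      simp only [KPData.w, hw, EllAux.cc, zsmul_eq_mul]
      push_cast
      ring
  · have hu : D.u0 n m h ≠ 0 := by
      intro h0
      have h1 : (1 + D.M n m h * D.C) *ᵥ D.u0 n m h = D.r n m h := by
        unfold KPData.u0
        rw [mulVec_mulVec, mul_nonsing_inv _ (hInv n m h), one_mulVec]
      rw [h0, mulVec_zero] at h1
      have h2 := congrFun h1 ⟨0, hN⟩
      rw [EllAux.r_fR] at h2
      exact mul_ne_zero (hρ0 _) (EllAux.fR_ne hgen (EllAux.ok_k hgen _) n m h) h2.symm
    obtain ⟨i, hi⟩ := Function.ne_iff.mp hu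
    exact EllAux.core (fun n m h => D.u0 n m h i) (fun n m h => EllAux.vv D n m h i) D.w
      (EllAux.cc D) (fun n m h => EllAux.u1 hgen hInv n m h i)
      (fun n m h => EllAux.u2 hgen hInv n m h i) (fun n m h => EllAux.u3 hgen hInv n m h i)
      n m h hi
end
end

section
/- The τ-function and w satisfy (ŵ − w̃)·τ̃·τ̂ = −χ_{−δ,ε}(ξ+δ)·τ·τ̂̃, where χ_{−δ,ε}(ξ+δ) = ζ(−δ) + ζ(ε) + ζ(ξ+δ) − ζ(ξ+ε), τ̃, τ̂ denote τ evaluated at (n+1,m,h), (n,m+1,h), τ̂̃ at (n+1,m+1,h), and similarly for w. -/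
open scoped BigOperators

noncomputable section

open Matrix

/-- elementary factor -/
def efac (u : ℂ) : ℂ := (1 - u) * Complex.exp (u + u ^ 2 / 2)

lemma efac_bound (u : ℂ) (hu : ‖u‖ ≤ 1 / 2) : ‖efac u - 1‖ ≤ 2 * ‖u‖ ^ 3 := by
  have h1 : ‖-u‖ < 1 := by rw [norm_neg]; linarith
  have h := Complex.norm_log_sub_logTaylor_le 2 h1
  have hne : (1 + -u) ≠ 0 := by
    intro h0
    have : u = 1 := by linear_combination -h0
    rw [this] at hu; norm_num at hu
  have e : Complex.log (1 + -u) - Complex.logTaylor (2 + 1) (-u)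
      = Complex.log (1 + -u) + (u + u ^ 2 / 2) := by
    simp [Complex.logTaylor_succ, Complex.logTaylor_zero]
    ring
  rw [e, norm_neg] at h
  have h2 : ‖Complex.log (1 + -u) + (u + u ^ 2 / 2)‖ ≤ ‖u‖ ^ 3 := by
    refine h.trans ?_
    have : (1 - ‖u‖)⁻¹ ≤ 2 := by
      rw [inv_le_comm₀ (by linarith) (by norm_num)]
      linarith
    have h3 : 0 ≤ ‖u‖ ^ 3 := by positivity
    norm_num
    nlinarith
  have h4 : ‖u‖ ^ 3 ≤ 1 := by
    apply pow_le_one₀ (norm_nonneg _); linarith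
  have h5 := Complex.norm_exp_sub_one_le (h2.trans h4)
  rw [Complex.exp_add, Complex.exp_log hne] at h5
  unfold efac
  rw [sub_eq_add_neg 1 u]
  linarith

namespace PeriodPair

variable (P : PeriodPair)

/-- sigma indexed by the lattice -/
def sig (z : ℂ) : ℂ := z * ∏' l : P.lattice, efac (z / l)

/-- zeta summand -/
def zt (l : P.lattice) (z : ℂ) : ℂ := 1 / (z - l) + 1 / l + z / (l : ℂ) ^ 2

lemma cofin (r : ℝ) : ∀ᶠ l : P.lattice in Filter.cofinite, r < ‖(l : ℂ)‖ := by
  refine (Metric.isCompact_iff_isClosed_bounded.mpr ⟨Metric.isClosed_closedBall,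
    Metric.isBounded_closedBall⟩ : IsCompact (Metric.closedBall (0 : P.lattice) r)).finite_of_discrete.subset ?_
  intro l hl
  simpa using hl

lemma efac_bound' (r : ℝ) (hr : 0 < r) (z : ℂ) (hz : ‖z‖ < r) (l : ℂ) (hl : 2 * r < ‖l‖) :
    ‖efac (z / l) - 1‖ ≤ 2 * r ^ 3 * ‖l‖ ^ (-3 : ℝ) := by
  have hl0 : 0 < ‖l‖ := by linarith
  have h := efac_bound (z / l) (by
    rw [norm_div, div_le_iff₀ hl0]; linarith)
  refine h.trans ?_
  have : ‖l‖ ^ (-3 : ℝ) = (‖l‖ ^ 3)⁻¹ := by norm_cast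
  rw [this, norm_div, div_pow, ← div_eq_mul_inv, mul_div_assoc]
  gcongr

lemma summ : Summable fun l : P.lattice => ‖(l : ℂ)‖ ^ (-3 : ℝ) :=
  (ZLattice.summable_norm_rpow P.lattice _ (by simp; norm_num))

lemma prodLU (r : ℝ) (hr : 0 < r) :
    HasProdLocallyUniformlyOn (fun (l : P.lattice) z => efac (z / l))
      (fun z => ∏' l : P.lattice, efac (z / l)) (Metric.ball 0 r) := by
  have h := Summable.hasProdLocallyUniformlyOn_one_add (R := ℂ)
    (f := fun (l : P.lattice) z => efac (z / l) - 1)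
    (u := fun l : P.lattice => 2 * r ^ 3 * ‖(l : ℂ)‖ ^ (-3 : ℝ))
    (Metric.isOpen_ball (x := (0 : ℂ)) (ε := r)) (P.summ.mul_left _) ?_ ?_
  · simpa using h
  · filter_upwards [P.cofin (2 * r)] with l hl z hz
    exact efac_bound' r hr z (by simpa using hz) l hl
  · intro l
    unfold efac
    fun_prop

lemma diffP : Differentiable ℂ (fun z => ∏' l : P.lattice, efac (z / l)) := by
  intro z
  have h := P.prodLU (‖z‖ + 1) (by positivity)
  rw [hasProdLocallyUniformlyOn_iff_tendstoLocallyUniformlyOn] at h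
  have h2 := h.differentiableOn (.of_forall fun s => ?_) Metric.isOpen_ball
  · exact (h2 z (by simp)).differentiableAt (Metric.isOpen_ball.mem_nhds (by simp))
  · unfold efac
    fun_prop

lemma diff_sig : Differentiable ℂ P.sig := by
  unfold sig
  exact differentiable_id.mul P.diffP

lemma efac_ne (z : ℂ) (hz : z ∉ P.lattice) (l : P.lattice) : efac (z / l) ≠ 0 := by
  unfold efac
  refine mul_ne_zero ?_ (Complex.exp_ne_zero _)
  intro h
  have h1 : z / (l : ℂ) = 1 := by linear_combination -h
  have : (l : ℂ) ≠ 0 := by rintro h0; rw [h0] at h1; simp at h1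
  rw [div_eq_one_iff_eq this] at h1
  exact hz (h1 ▸ l.2)

lemma tprod_ne (z : ℂ) (hz : ∀ l : P.lattice, efac (z / l) ≠ 0) :
    ∏' l : P.lattice, efac (z / l) ≠ 0 := by
  have h := tprod_one_add_ne_zero_of_summable (R := ℂ) (f := fun l : P.lattice => efac (z / l) - 1)
    (by simpa using hz) ?_
  · simpa using h
  · refine Summable.of_norm_bounded_eventually
      (P.summ.mul_left (2 * (‖z‖ + 1) ^ 3)) ?_
    filter_upwards [P.cofin (2 * (‖z‖ + 1))] with l hl
    rw [norm_norm]
    exact efac_bound' _ (by positivity) z (by linarith) l hl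

lemma sig_ne (z : ℂ) (hz : z ∉ P.lattice) : P.sig z ≠ 0 := by
  unfold sig
  refine mul_ne_zero ?_ (P.tprod_ne z (P.efac_ne z hz))
  rintro rfl
  exact hz (zero_mem _)

lemma sig_neg (z : ℂ) : P.sig (-z) = - P.sig z := by
  unfold sig
  rw [← (Equiv.neg P.lattice).tprod_eq]
  simp

lemma deriv_sig_zero : HasDerivAt P.sig 1 0 := by
  have h := (hasDerivAt_id (0 : ℂ)).mul (P.diffP 0).hasDerivAt
  have h' : HasDerivAt P.sig _ 0 := h
  convert h' using 1
  simp [efac]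

lemma zt_LU : HasSumLocallyUniformly P.zt (fun z => ∑' l, P.zt l z) := by
  refine P.hasSumLocallyUniformly_aux (u := fun r l => 2 * r ^ 2 * ‖l‖ ^ (-3 : ℝ)) _
    (fun _ _ ↦ P.summ.mul_left _) fun r hr ↦
    Filter.eventually_atTop.mpr ⟨2 * r, ?_⟩
  rintro _ h s hs l rfl
  have hl0 : 0 < ‖(l : ℂ)‖ := by linarith
  have hl : (l : ℂ) ≠ 0 := norm_pos_iff.mp hl0
  have h1 : ‖(l : ℂ)‖ / 2 ≤ ‖s - l‖ := by
    rw [norm_sub_rev]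
    exact .trans (by linarith) (norm_sub_norm_le (l : ℂ) s)
  have h2 : s - l ≠ 0 := norm_pos_iff.mp (by linarith)
  have e : P.zt l s = s ^ 2 / ((l : ℂ) ^ 2 * (s - l)) := by
    unfold zt; field_simp; ring
  have : ‖l‖ ^ (-3 : ℝ) = (‖(l : ℂ)‖ ^ 3)⁻¹ := by norm_cast
  rw [e, this, norm_div, norm_mul, norm_pow, norm_pow]
  calc ‖s‖ ^ 2 / (‖(l : ℂ)‖ ^ 2 * ‖s - l‖) ≤ r ^ 2 / (‖(l : ℂ)‖ ^ 2 * (‖(l : ℂ)‖ / 2)) := by gcongr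
    _ = _ := by field_simp

lemma hasDerivAt_zt (l : P.lattice) (z : ℂ) (hz : z ∉ P.lattice) :
    HasDerivAt (P.zt l) (-(1 / (z - l) ^ 2 - 1 / (l : ℂ) ^ 2)) z := by
  have h : z - l ≠ 0 := fun h => hz (by rw [sub_eq_zero.mp h]; exact l.2)
  have h1 := (((hasDerivAt_id z).sub_const (l : ℂ)).inv h).add_const (1 / (l : ℂ))
  have h2 := h1.add ((hasDerivAt_id z).div_const ((l : ℂ) ^ 2))
  convert! h2 using 1
  · ext x; simp [zt]
  · simp; ring

lemma isOpen_c : IsOpen (P.lattice : Set ℂ)ᶜ := P.isClosed_lattice.isOpen_compl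

lemma diff_zt : DifferentiableOn ℂ (fun z => ∑' l, P.zt l z) (P.lattice : Set ℂ)ᶜ :=
  P.zt_LU.hasSumLocallyUniformlyOn.differentiableOn
    (.of_forall fun s ↦ .fun_sum fun i hi z hz ↦
      (P.hasDerivAt_zt i z hz).differentiableAt.differentiableWithinAt) P.isOpen_c

lemma deriv_zt : Set.EqOn (deriv (fun z => ∑' l, P.zt l z)) (fun z => - P.weierstrassP z)
    (P.lattice : Set ℂ)ᶜ := by
  refine ((P.zt_LU).tendstoLocallyUniformlyOn.deriv
    (.of_forall fun s ↦ .fun_sum fun i hi z hz ↦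
      (P.hasDerivAt_zt i z hz).differentiableAt.differentiableWithinAt) P.isOpen_c).unique ?_
  refine (P.hasSumLocallyUniformly_weierstrassP.tendstoLocallyUniformlyOn.neg).congr ?_
  intro s z hz
  simp only [Function.comp_apply, Pi.neg_apply]
  rw [deriv_fun_sum (fun i _ => (P.hasDerivAt_zt i z hz).differentiableAt), ← Finset.sum_neg_distrib]
  exact Finset.sum_congr rfl fun i _ => ((P.hasDerivAt_zt i z hz).deriv).symm

lemma logDeriv_fac (l : P.lattice) (z : ℂ) (hz : z ∉ P.lattice) :
    logDeriv (fun z => efac (z / l)) z = P.zt l z - if l = 0 then 1 / z else 0 := by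
  by_cases hl : l = 0
  · subst hl
    simp [efac, zt, logDeriv_apply]
  have hl' : (l : ℂ) ≠ 0 := by simpa using hl
  have h : z - l ≠ 0 := fun h => hz (by rw [sub_eq_zero.mp h]; exact l.2)
  rw [if_neg hl, sub_zero]
  have h0 := (hasDerivAt_id z).div_const (l : ℂ)
  have h1 := (h0.const_sub 1).mul ((h0.add ((h0.pow 2).div_const 2)).cexp)
  have h2 : HasDerivAt (fun z => efac (z / l)) _ z := h1
  rw [logDeriv_apply, h2.deriv]
  have h3 : (1 - z / (l : ℂ)) ≠ 0 := by
    intro h4; apply h; field_simp at h4; linear_combination -h4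
  have h5 : (l : ℂ) - z ≠ 0 := fun h6 => h (by linear_combination - h6)
  simp only [efac, zt, id, Pi.add_apply, Pi.pow_apply]
  rw [show (1 - z / (l : ℂ)) = (l - z) / l by field_simp] at *
  have := Complex.exp_ne_zero (z / l + (z / l) ^ 2 / 2)
  rw [div_eq_iff (mul_ne_zero h3 this)]
  generalize Complex.exp (z / l + (z / l) ^ 2 / 2) = E at *
  norm_num
  field_simp
  ring

lemma logDeriv_sig (z : ℂ) (hz : z ∉ P.lattice) : logDeriv P.sig z = ∑' l, P.zt l z := by
  have hz0 : z ≠ 0 := by rintro rfl; exact hz (zero_mem _)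
  have hsum : Summable fun l => P.zt l z := P.zt_LU.hasSum.summable
  have hs1 : HasSum (fun l : P.lattice => if l = 0 then 1 / z else 0) (1 / z) := hasSum_ite_eq 0 _
  have h1 : logDeriv P.sig z = logDeriv id z + logDeriv (fun z => ∏' l : P.lattice, efac (z / l)) z :=
    logDeriv_mul (f := id) z hz0 (P.tprod_ne z (P.efac_ne z hz)) differentiableAt_id (P.diffP z)
  rw [h1, logDeriv_tprod_eq_tsum (s := Metric.ball 0 (‖z‖ + 1)) Metric.isOpen_ball (by simp)
    (P.efac_ne z hz) ?_ ?_ ⟨_, P.prodLU (‖z‖ + 1) (by positivity)⟩ (P.tprod_ne z (P.efac_ne z hz))]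
  · simp_rw [fun l => P.logDeriv_fac l z hz]
    rw [hsum.tsum_sub hs1.summable, hs1.tsum_eq]
    simp [logDeriv_apply]
  · intro l
    unfold efac
    fun_prop
  · simp_rw [fun l => P.logDeriv_fac l z hz]
    exact hsum.sub hs1.summable

lemma countable_lattice : (P.lattice : Set ℂ).Countable := by
  have : Countable P.lattice := P.latticeEquivProd.toEquiv.countable_iff.mpr inferInstance
  exact Set.countable_coe_iff.mp this

lemma preconn : IsPreconnected (P.lattice : Set ℂ)ᶜ :=
  (P.countable_lattice.isPathConnected_compl_of_one_lt_rank
    (by simp)).isConnected.isPreconnected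

lemma add_notMem {z w : ℂ} (hz : z ∉ P.lattice) (hw : w ∈ P.lattice) : z + w ∉ P.lattice :=
  fun h => hz (by simpa using sub_mem h hw)

lemma zeta_quasi (w : P.lattice) : ∃ c : ℂ, ∀ z ∉ P.lattice,
    logDeriv P.sig (z + w) = logDeriv P.sig z + c := by
  set Z : ℂ → ℂ := fun z => ∑' l, P.zt l z with hZ
  have hd : ∀ z ∉ P.lattice, DifferentiableAt ℂ Z z := fun z hz =>
    (P.diff_zt z hz).differentiableAt (P.isOpen_c.mem_nhds hz)
  have hD : ∀ z ∉ P.lattice, HasDerivAt (fun z => Z (z + w) - Z z) 0 z := by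
    intro z hz
    have hz' := P.add_notMem hz w.2
    have h1 := ((hd _ hz').hasDerivAt.comp_add_const z (w : ℂ)).sub (hd z hz).hasDerivAt
    have e1 := P.deriv_zt hz
    have e2 := P.deriv_zt hz'
    rw [e1, e2] at h1
    have h2 : HasDerivAt (fun z => Z (z + w) - Z z) _ z := h1
    convert h2 using 1
    simp
  obtain ⟨c, hc⟩ := P.isOpen_c.exists_is_const_of_deriv_eq_zero P.preconn
    (fun z hz => (hD z hz).differentiableAt.differentiableWithinAt) (fun z hz => (hD z hz).deriv)
  refine ⟨c, fun z hz => ?_⟩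
  rw [P.logDeriv_sig z hz, P.logDeriv_sig _ (P.add_notMem hz w.2)]
  linear_combination hc z hz

lemma sig_zero : P.sig 0 = 0 := by simp [sig]

lemma dense_c : Dense (P.lattice : Set ℂ)ᶜ :=
  P.countable_lattice.dense_compl ℝ

lemma sig_quasi (w : P.lattice) : ∃ c η : ℂ, c ≠ 0 ∧
    ∀ z, P.sig (z + w) = c * Complex.exp (η * z) * P.sig z := by
  obtain ⟨η, hη⟩ := P.zeta_quasi w
  have hds := P.diff_sig
  have hcs := hds.continuous
  have h := (logDeriv_eqOn_iff (f := fun z => P.sig (z + w))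
    (g := fun z => Complex.exp (η * z) * P.sig z) (s := (P.lattice : Set ℂ)ᶜ)
    (by fun_prop) (by fun_prop) P.isOpen_c P.preconn
    (fun z hz => mul_ne_zero (Complex.exp_ne_zero _) (P.sig_ne z hz))
    (fun z hz => P.sig_ne _ (P.add_notMem hz w.2))).mp ?_
  · obtain ⟨c, hc, h⟩ := h
    refine ⟨c, η, hc, ?_⟩
    have : (fun z => P.sig (z + w)) = fun z => c * Complex.exp (η * z) * P.sig z := by
      apply Continuous.ext_on P.dense_c
      · exact hcs.comp (continuous_add_const _)
      · exact (by fun_prop : Continuous fun z => c * Complex.exp (η * z)).mul hcs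
      · intro z hz
        have := h hz
        simp only [Pi.smul_apply, smul_eq_mul] at this
        exact this.trans (by ring)
    exact fun z => congrFun this z
  · intro z hz
    have e1 : logDeriv (fun z => P.sig (z + w)) z = logDeriv P.sig (z + w) := by
      simp [logDeriv_apply, deriv_comp_add_const]
    have e2 : logDeriv (fun z => Complex.exp (η * z) * P.sig z) z
       = logDeriv (fun z => Complex.exp (η * z)) z + logDeriv P.sig z :=
      logDeriv_mul z (Complex.exp_ne_zero _) (P.sig_ne z hz) (by fun_prop) (hds z)
    have e3 : logDeriv (fun z => Complex.exp (η * z)) z = η := by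
      have : HasDerivAt (fun z => Complex.exp (η * z)) (Complex.exp (η * z) * (η * 1)) z :=
        ((hasDerivAt_id z).const_mul η).cexp
      rw [logDeriv_apply, this.deriv]
      field_simp [Complex.exp_ne_zero]
    rw [e1, e2, e3, hη z hz, add_comm]

lemma sig_coe (w : P.lattice) : P.sig w = 0 := by
  obtain ⟨c, η, _, h⟩ := P.sig_quasi w
  have := h 0
  simpa [sig_zero] using this

lemma deriv_sig_coe (w : P.lattice) : deriv P.sig w ≠ 0 := by
  obtain ⟨c, η, hc, h⟩ := P.sig_quasi w
  have h1 : HasDerivAt (fun z => P.sig (z + w)) (deriv P.sig w) 0 := by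
    have := (P.diff_sig (0 + w)).hasDerivAt.comp_add_const 0 (w : ℂ)
    simpa using this
  have h2 : HasDerivAt (fun z => c * Complex.exp (η * z) * P.sig z) c 0 := by
    have h3 : DifferentiableAt ℂ (fun z => c * Complex.exp (η * z)) 0 := by fun_prop
    have := h3.hasDerivAt.mul P.deriv_sig_zero
    simpa [sig_zero] using! this
  rw [← funext h] at h2
  rw [h1.unique h2]
  exact hc


/-- L'Hopital-type quotient of entire functions with simple denominators is entire. -/
lemma diff_quot {f D : ℂ → ℂ} (hf : Differentiable ℂ f) (hD : Differentiable ℂ D)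
    (h : ∀ z, D z = 0 → f z = 0 ∧ deriv D z ≠ 0) :
    Differentiable ℂ (fun z => if D z = 0 then deriv f z / deriv D z else f z / D z) := by
  intro z₀
  have hopen : IsOpen {z | D z ≠ 0} := isOpen_ne_fun hD.continuous continuous_const
  by_cases h0 : D z₀ = 0
  · obtain ⟨hf0, hd0⟩ := h z₀ h0
    have d1 : Differentiable ℂ (dslope f z₀) := by
      rw [← differentiableOn_univ]
      exact (Complex.differentiableOn_dslope Filter.univ_mem).mpr hf.differentiableOn
    have d2 : Differentiable ℂ (dslope D z₀) := by
      rw [← differentiableOn_univ]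
      exact (Complex.differentiableOn_dslope Filter.univ_mem).mpr hD.differentiableOn
    have hne : dslope D z₀ z₀ ≠ 0 := by rwa [dslope_same]
    have hq : DifferentiableAt ℂ (fun z => dslope f z₀ z / dslope D z₀ z) z₀ :=
      (d1 z₀).div (d2 z₀) hne
    refine hq.congr_of_eventuallyEq ?_
    filter_upwards [d2.continuous.continuousAt.eventually_ne hne] with z hz
    by_cases hzz : z = z₀
    · subst hzz
      simp [h0]
    have hs : z - z₀ ≠ 0 := sub_ne_zero.mpr hzz
    rw [dslope_of_ne _ hzz, slope_def_field, h0, sub_zero] at hz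
    have hDz : D z ≠ 0 := fun h => hz (by simp [h])
    rw [if_neg hDz, dslope_of_ne _ hzz, dslope_of_ne _ hzz, slope_def_field, slope_def_field, h0, hf0]
    field_simp
    simp [mul_comm]
  · refine ((hf z₀).div (hD z₀) h0).congr_of_eventuallyEq ?_
    filter_upwards [hopen.mem_nhds h0] with z hz
    rw [if_neg hz]
    rfl

lemma sig_eq_zero {z : ℂ} (h : P.sig z = 0) : z ∈ P.lattice := by
  by_contra h'
  exact P.sig_ne z h' h

lemma three_gen (a b c : ℂ) (h2b : b + b ∉ P.lattice) (h1 : b - c ∉ P.lattice)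
    (h2 : b + c ∉ P.lattice) (z : ℂ) :
    P.sig (z + a) * P.sig (z - a) * P.sig (b + c) * P.sig (b - c)
    + P.sig (z + b) * P.sig (z - b) * P.sig (c + a) * P.sig (c - a)
    + P.sig (z + c) * P.sig (z - c) * P.sig (a + b) * P.sig (a - b) = 0 := by
  have hs := P.diff_sig
  set f : ℂ → ℂ := fun z => P.sig (z + a) * P.sig (z - a) * P.sig (b + c) * P.sig (b - c)
    + P.sig (z + b) * P.sig (z - b) * P.sig (c + a) * P.sig (c - a)
    + P.sig (z + c) * P.sig (z - c) * P.sig (a + b) * P.sig (a - b) with hfdef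
  set D : ℂ → ℂ := fun z => P.sig (z - b) * P.sig (z + b) with hDdef
  have hf : Differentiable ℂ f := by fun_prop
  have hD : Differentiable ℂ D := by fun_prop
  have ab : P.sig (b - a) = - P.sig (a - b) := by rw [← sig_neg, neg_sub]
  have hodd : ∀ x y : ℂ, P.sig (-x + y) = - P.sig (x - y) := fun x y => by
    rw [← sig_neg]; congr 1; ring
  have hodd' : ∀ x y : ℂ, P.sig (-x - y) = - P.sig (x + y) := fun x y => by
    rw [← sig_neg]; congr 1; ring
  have fb : f b = 0 := by
    simp only [hfdef, sub_self, sig_zero, ab, add_comm b a]; ring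
  have fnb : f (-b) = 0 := by
    simp only [hfdef, hodd, hodd', sub_self, sig_zero, ab, add_comm b a]; ring
  have fc : f c = 0 := by
    have : P.sig (c - b) = - P.sig (b - c) := by rw [← sig_neg, neg_sub]
    simp only [hfdef, sub_self, sig_zero, this, add_comm c b]; ring
  have quasi : ∀ w : P.lattice, ∃ E : ℂ → ℂ, (∀ z, E z ≠ 0) ∧
      (∀ z, f (z + w) = E z * f z) ∧ ∀ z, D (z + w) = E z * D z := by
    intro w
    obtain ⟨k, η, hk, hq⟩ := P.sig_quasi w
    refine ⟨fun z => k ^ 2 * Complex.exp (2 * η * z), fun z => mul_ne_zero (pow_ne_zero _ hk)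
      (Complex.exp_ne_zero _), ?_⟩
    have pr : ∀ z x, P.sig (z + w + x) * P.sig (z + w - x) =
        k ^ 2 * Complex.exp (2 * η * z) * (P.sig (z + x) * P.sig (z - x)) := by
      intro z x
      rw [show z + w + x = (z + x) + w by ring, show z + w - x = (z - x) + w by ring, hq, hq,
        show 2 * η * z = η * (z + x) + η * (z - x) by ring, Complex.exp_add]
      ring
    constructor
    · intro z
      simp only [hfdef, pr]; ring
    · intro z
      simp only [hDdef]
      rw [mul_comm, pr]; ring
  have key : ∀ z, D z = 0 → f z = 0 ∧ deriv D z ≠ 0 := by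
    intro z hz
    have hder : deriv D z = deriv P.sig (z - b) * P.sig (z + b)
        + P.sig (z - b) * deriv P.sig (z + b) :=
      (((hs _).hasDerivAt.comp_sub_const z b).mul ((hs _).hasDerivAt.comp_add_const z b)).deriv
    rcases mul_eq_zero.mp hz with h | h
    · have hm := P.sig_eq_zero h
      obtain ⟨E, _, hE, _⟩ := quasi ⟨z - b, hm⟩
      constructor
      · have := hE b
        rw [fb] at this
        simpa using this
      · rw [hder, h, zero_mul, add_zero]
        refine mul_ne_zero (P.deriv_sig_coe ⟨z - b, hm⟩) (P.sig_ne _ fun hm' => h2b ?_)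
        have := sub_mem hm' hm
        convert this using 1; ring
    · have hm := P.sig_eq_zero h
      obtain ⟨E, _, hE, _⟩ := quasi ⟨z + b, hm⟩
      constructor
      · have := hE (-b)
        rw [fnb] at this
        simpa using this
      · rw [hder, h, mul_zero, zero_add]
        refine mul_ne_zero (P.sig_ne _ fun hm' => h2b ?_) (P.deriv_sig_coe ⟨z + b, hm⟩)
        have := sub_mem hm hm'
        convert this using 1; ring
  have hQ := diff_quot hf hD key
  set Q : ℂ → ℂ := fun z => if D z = 0 then deriv f z / deriv D z else f z / D z with hQdef
  have hDc : D c ≠ 0 := by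
    refine mul_ne_zero (P.sig_ne _ fun h => h1 ?_) (P.sig_ne _ fun h => h2 ?_)
    · have := neg_mem h; simpa using this
    · rwa [add_comm]
  have hdense : Dense {z | D z ≠ 0} := by
    have hcount : ({z | D z = 0}).Countable := by
      have h3 : {z | D z = 0} ⊆ (fun l => l + b) '' (P.lattice : Set ℂ) ∪
          (fun l => l - b) '' (P.lattice : Set ℂ) := by
        intro z hz
        rcases mul_eq_zero.mp hz with h | h
        · exact Or.inl ⟨z - b, P.sig_eq_zero h, by simp⟩
        · exact Or.inr ⟨z + b, P.sig_eq_zero h, by simp⟩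
      exact ((P.countable_lattice.image _).union (P.countable_lattice.image _)).mono h3
    exact hcount.dense_compl ℝ
  have hper : ∀ w : P.lattice, ∀ z, Q (z + w) = Q z := by
    intro w
    obtain ⟨E, hE0, hE, hE'⟩ := quasi w
    have : (fun z => Q (z + w)) = Q := by
      apply Continuous.ext_on hdense (hQ.continuous.comp (continuous_add_const _)) hQ.continuous
      intro z hz
      have hz' : D z ≠ 0 := hz
      simp only [hQdef, Function.comp_apply]
      rw [if_neg hz', if_neg (by rw [hE']; exact mul_ne_zero (hE0 z) hz'), hE, hE',
        mul_div_mul_left _ _ (hE0 z)]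
    exact fun z => congrFun this z
  have hbd := (IsZLattice.isCompact_range_of_periodic P.lattice Q hQ.continuous
    fun z w hw => hper ⟨w, hw⟩ z).isBounded
  have hconst : ∀ z, Q z = 0 := fun z => by
    rw [hQ.apply_eq_apply_of_bounded hbd z c]
    simp only [hQdef]
    rw [if_neg hDc, fc, zero_div]
  by_cases hz : D z = 0
  · exact (key z hz).1
  · have := hconst z
    simp only [hQdef] at this
    rw [if_neg hz, div_eq_zero_iff] at this
    exact this.resolve_right hz

lemma three (a b c z : ℂ) :
    P.sig (z + a) * P.sig (z - a) * P.sig (b + c) * P.sig (b - c)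
    + P.sig (z + b) * P.sig (z - b) * P.sig (c + a) * P.sig (c - a)
    + P.sig (z + c) * P.sig (z - c) * P.sig (a + b) * P.sig (a - b) = 0 := by
  have hs := P.diff_sig
  have hdense : Dense {b : ℂ | b + b ∉ P.lattice ∧ b - c ∉ P.lattice ∧ b + c ∉ P.lattice} := by
    have hcount : ({b : ℂ | b + b ∉ P.lattice ∧ b - c ∉ P.lattice ∧ b + c ∉ P.lattice}ᶜ).Countable := by
      refine (((P.countable_lattice.image (fun l => l / 2)).union
        (P.countable_lattice.image (fun l => l + c))).union
        (P.countable_lattice.image (fun l => l - c))).mono ?_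
      intro b hb
      by_cases h1 : b + b ∈ P.lattice
      · exact Or.inl (Or.inl ⟨_, h1, by ring⟩)
      by_cases h2 : b - c ∈ P.lattice
      · exact Or.inl (Or.inr ⟨_, h2, by ring⟩)
      by_cases h3 : b + c ∈ P.lattice
      · exact Or.inr ⟨_, h3, by ring⟩
      exact absurd ⟨h1, h2, h3⟩ hb
    simpa using hcount.dense_compl ℝ
  have : (fun b => P.sig (z + a) * P.sig (z - a) * P.sig (b + c) * P.sig (b - c)
    + P.sig (z + b) * P.sig (z - b) * P.sig (c + a) * P.sig (c - a)
    + P.sig (z + c) * P.sig (z - c) * P.sig (a + b) * P.sig (a - b)) = fun _ => 0 := by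
    refine Continuous.ext_on hdense ?_ continuous_const ?_
    · exact Differentiable.continuous (𝕜 := ℂ) (by fun_prop)
    · rintro b ⟨h1, h2, h3⟩
      exact P.three_gen a b c h1 h2 h3 z
  exact congrFun this b

/-- three term identity in Fay form -/
lemma fay (x y a b : ℂ) :
    P.sig (x + a) * P.sig (y + b) * P.sig (x + y) * P.sig (a - b) =
    P.sig (x + a - b) * P.sig (x + y + b) * P.sig a * P.sig y
    - P.sig (x + y + a) * P.sig (y + b - a) * P.sig x * P.sig b := by
  have h := P.three ((x + a - y - b) / 2) ((x + y + a - b) / 2) ((x + y - a + b) / 2)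
    ((x + y + a + b) / 2)
  ring_nf at h ⊢
  have hy : P.sig (-y) = - P.sig y := P.sig_neg y
  rw [hy] at h
  linear_combination h

/-- The `zeta` addition formula. -/
lemma fayz (x y b : ℂ) (hx : x ∉ P.lattice) (hy : y ∉ P.lattice) (hb : b ∉ P.lattice)
    (hxyb : x + y + b ∉ P.lattice) :
    P.sig (x + b) * P.sig (y + b) * P.sig (x + y) =
    P.sig (x + y + b) * P.sig x * P.sig y * P.sig b *
      (deriv P.sig x / P.sig x + deriv P.sig y / P.sig y + deriv P.sig b / P.sig b
        - deriv P.sig (x + y + b) / P.sig (x + y + b)) := by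
  have hs := P.diff_sig
  have hd : ∀ u, HasDerivAt P.sig (deriv P.sig u) u := fun u => (hs u).hasDerivAt
  have hl : HasDerivAt (fun a => P.sig (x + a) * P.sig (y + b) * P.sig (x + y) * P.sig (a - b))
      (P.sig (x + b) * P.sig (y + b) * P.sig (x + y)) b := by
    have h1 : HasDerivAt (fun a => P.sig (a - b)) 1 b := by
      have : HasDerivAt P.sig 1 (b - b) := by rw [sub_self]; exact P.deriv_sig_zero
      exact this.comp_sub_const b b
    have h2 : DifferentiableAt ℂ (fun a => P.sig (x + a) * P.sig (y + b) * P.sig (x + y)) b := by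
      fun_prop
    have h3 : HasDerivAt (fun a => P.sig (x + a) * P.sig (y + b) * P.sig (x + y) * P.sig (a - b))
      _ b := h2.hasDerivAt.mul h1
    convert h3 using 1
    simp [sig_zero]
  have hr : HasDerivAt (fun a => P.sig (x + a - b) * P.sig (x + y + b) * P.sig a * P.sig y
    - P.sig (x + y + a) * P.sig (y + b - a) * P.sig x * P.sig b)
      (((deriv P.sig x * P.sig (x + y + b)) * P.sig b + P.sig x * P.sig (x + y + b) * deriv P.sig b)
        * P.sig y - (deriv P.sig (x + y + b) * P.sig y + P.sig (x + y + b) * (- deriv P.sig y))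
        * P.sig x * P.sig b) b := by
    have h1 : HasDerivAt (fun a => P.sig (x + a - b)) (deriv P.sig x) b := by
      have := (hd (b + (x - b))).comp_add_const b (x - b)
      convert! this using 2
      · ring_nf
      · ring
    have h2 : HasDerivAt (fun a => P.sig (x + y + a)) (deriv P.sig (x + y + b)) b :=
      (hd (x + y + b)).comp_const_add (x + y) b
    have h3 : HasDerivAt (fun a => P.sig (y + b - a)) (- deriv P.sig y) b := by
      have := (hd (y + b - b)).comp_const_sub (y + b) b
      simpa using this
    have h4 := (((h1.mul_const (P.sig (x + y + b))).mul (hd b)).mul_const (P.sig y)).sub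
      (((h2.mul h3).mul_const (P.sig x)).mul_const (P.sig b))
    convert! h4 using 1
    simp
  rw [← funext (fun a => P.fay x y a b)] at hr
  rw [hl.unique hr]
  have := P.sig_ne x hx
  have := P.sig_ne y hy
  have := P.sig_ne b hb
  have := P.sig_ne _ hxyb
  field_simp
  ring

end PeriodPair

namespace EllLattice

/-- The Mathlib period pair. -/
def toP (L : EllLattice) : PeriodPair where
  ω₁ := L.ω₁
  ω₂ := L.ω₂
  indep := LinearIndependent.pair_iff.mpr L.indep

variable (L : EllLattice)

lemma mem_iff (z : ℂ) : L.mem z ↔ z ∈ L.toP.lattice := by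
  rw [PeriodPair.mem_lattice]
  simp only [mem, toP, zsmul_eq_mul]
  constructor <;> rintro ⟨m, n, h⟩ <;> exact ⟨m, n, h.symm⟩

lemma sigma_eq : L.sigma = L.toP.sig := by
  ext z
  unfold sigma PeriodPair.sig
  congr 1
  rw [← L.toP.latticeEquivProd.symm.toEquiv.tprod_eq]
  have h := tprod_subtype_eq_of_mulSupport_subset
    (f := fun p : ℤ × ℤ => efac (z / ((L.toP.latticeEquivProd.symm p : L.toP.lattice) : ℂ)))
    (s := {p | p ≠ 0}) (by
      intro p hp h0
      apply hp
      subst h0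
      simp [efac])
  refine Eq.trans ?_ h
  refine tprod_congr fun p => ?_
  have : ((L.toP.latticeEquivProd.symm p.1 : L.toP.lattice) : ℂ) = L.per p.1 := by
    rw [PeriodPair.latticeEquiv_symm_apply]
    simp [per, toP]
  rw [this]
  unfold efac
  congr 3
  rw [div_pow, div_div, mul_comm (2 : ℂ)]

lemma sigma_ne {z : ℂ} (h : ¬ L.mem z) : L.sigma z ≠ 0 := by
  rw [sigma_eq]
  exact L.toP.sig_ne z (fun h' => h ((L.mem_iff z).mpr h'))

lemma sigma_neg (z : ℂ) : L.sigma (-z) = - L.sigma z := by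
  rw [sigma_eq, PeriodPair.sig_neg]

lemma zeta_neg (z : ℂ) : L.zeta (-z) = - L.zeta z := by
  have h : deriv L.sigma (-z) = deriv L.sigma z := by
    have h1 : deriv (fun x => L.sigma (-x)) z = - deriv L.sigma (-z) := deriv_comp_neg _ _
    simp only [sigma_neg] at h1
    rw [deriv.fun_neg] at h1
    linear_combination h1
  unfold zeta
  rw [h, sigma_neg, div_neg]

lemma mem_neg {z : ℂ} (h : ¬ L.mem z) : ¬ L.mem (-z) := by
  rw [mem_iff] at *
  simpa using h

lemma Phi_fay (x d k k' : ℂ) (hx : ¬ L.mem x) (hd : ¬ L.mem d) (hxd : ¬ L.mem (x + d))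
    (hk : ¬ L.mem k) (hk' : ¬ L.mem k') (hkk : ¬ L.mem (k + k')) :
    L.Phi (x + d) (k + k') * L.Phi d (-k) =
      L.Phi x (k + k') * L.Phi d k' - L.Phi (x + d) k' * L.Phi x k := by
  have h := L.toP.fay (x + d) (-d) (k + k') k
  rw [← sigma_eq] at h
  unfold Phi
  have := L.sigma_ne hx
  have := L.sigma_ne hd
  have := L.sigma_ne hxd
  have := L.sigma_ne hk
  have := L.sigma_ne hk'
  have := L.sigma_ne hkk
  rw [L.sigma_neg k, show d + -k = -(-d + k) by ring, L.sigma_neg (-d + k)]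
  rw [show x + d + -d = x by ring, show k + k' - k = k' by ring,
    show x + d + (k + k') - k = x + d + k' by ring, show -d + k - (k + k') = -(d + k') by ring,
    L.sigma_neg d, L.sigma_neg (d + k')] at h
  field_simp
  linear_combination h

lemma Phi_z (x y b : ℂ) (hx : ¬ L.mem x) (hy : ¬ L.mem y) (hb : ¬ L.mem b)
    (hxy : ¬ L.mem (x + y)) (hxyb : ¬ L.mem (x + y + b)) :
    L.Phi x b * L.Phi y b =
      L.Phi (x + y) b * (L.zeta x + L.zeta y + L.zeta b - L.zeta (x + y + b)) := by
  have h := L.toP.fayz x y b (fun h => hx ((L.mem_iff _).mpr h)) (fun h => hy ((L.mem_iff _).mpr h))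
    (fun h => hb ((L.mem_iff _).mpr h)) (fun h => hxyb ((L.mem_iff _).mpr h))
  rw [← sigma_eq] at h
  have h1 : ∀ u, deriv L.sigma u / L.sigma u = L.zeta u := fun u => rfl
  simp only [h1] at h
  unfold Phi
  have := L.sigma_ne hx
  have := L.sigma_ne hy
  have := L.sigma_ne hb
  have := L.sigma_ne hxy
  field_simp
  linear_combination h

lemma Phi_neg_neg (d k : ℂ) : L.Phi d (-k) = - L.Phi (-d) k := by
  unfold Phi
  rw [show d + -k = -(-d + k) by ring, sigma_neg, sigma_neg, sigma_neg]
  ring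

lemma exp_Psi (d k : ℂ) : Complex.exp (L.zeta d * k) * L.Psi d k = L.Phi d k := by
  unfold Psi
  rw [mul_comm, mul_assoc, ← Complex.exp_add]
  simp

lemma exp_Psi' (d k : ℂ) : Complex.exp (-(L.zeta d) * k) * L.Psi d (-k) = L.Phi d (-k) := by
  rw [← exp_Psi]; congr 2; ring

lemma Phi_ne {d k : ℂ} (hd : ¬ L.mem d) (hk : ¬ L.mem k) (hdk : ¬ L.mem (d + k)) :
    L.Phi d k ≠ 0 :=
  div_ne_zero (L.sigma_ne hdk) (mul_ne_zero (L.sigma_ne hd) (L.sigma_ne hk))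

end EllLattice

lemma det_rank1 {N N' : ℕ} (M : Matrix (Fin N) (Fin N') ℂ) (C : Matrix (Fin N') (Fin N) ℂ)
    (r : Fin N → ℂ) (s : Fin N' → ℂ) (h : IsUnit (1 + M * C).det) :
    (1 + (M + vecMulVec r s) * C).det =
      (1 + M * C).det * (1 + s ⬝ᵥ (C *ᵥ ((1 + M * C)⁻¹ *ᵥ r))) := by
  have h1 := det_add_replicateCol_mul_replicateRow (ι := Unit) h r (s ᵥ* C)
  rw [← vecMulVec_eq, ← vecMulVec_mul] at h1
  rw [Matrix.add_mul, ← add_assoc, h1]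
  congr 1
  rw [det_unique]
  simp only [Matrix.add_apply, Matrix.one_apply_eq]
  congr 1
  rw [dotProduct_mulVec, dotProduct_mulVec]
  simp [Matrix.mul_apply, dotProduct, vecMul]

lemma matrix_core {N N' : ℕ} (M M1 M2 M12 : Matrix (Fin N) (Fin N') ℂ)
    (C : Matrix (Fin N') (Fin N) ℂ) (r r1 r2 : Fin N → ℂ) (s1 s2 s12 : Fin N' → ℂ) (χ : ℂ)
    (h1 : M = M1 + vecMulVec r s1) (h2 : M = M2 + vecMulVec r s2)
    (h12 : M2 = M12 + vecMulVec r2 s12)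
    (hr : r2 - r1 = χ • r) (hs : s1 - s2 = χ • s12)
    (u1 : IsUnit (1 + M1 * C).det) (u2 : IsUnit (1 + M2 * C).det) :
    (-χ + s1 ⬝ᵥ (C *ᵥ ((1 + M1 * C)⁻¹ *ᵥ r1)) - s2 ⬝ᵥ (C *ᵥ ((1 + M2 * C)⁻¹ *ᵥ r2)))
      * (1 + M1 * C).det * (1 + M2 * C).det = -χ * (1 + M * C).det * (1 + M12 * C).det := by
  have d1 : (1 + M * C).det = (1 + M1 * C).det * (1 + s1 ⬝ᵥ (C *ᵥ ((1 + M1 * C)⁻¹ *ᵥ r))) := by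
    rw [h1]; exact det_rank1 M1 C r s1 u1
  have d2 : (1 + M12 * C).det =
      (1 + M2 * C).det * (1 - s12 ⬝ᵥ (C *ᵥ ((1 + M2 * C)⁻¹ *ᵥ r2))) := by
    have e : M12 = M2 + vecMulVec (-r2) s12 := by rw [h12, neg_vecMulVec]; simp
    have := det_rank1 M2 C (-r2) s12 u2
    rw [← e] at this
    rw [this]
    simp [mulVec_neg, sub_eq_add_neg]
  set A := (1 + M1 * C)⁻¹ with hA
  set x := (1 + M2 * C)⁻¹ *ᵥ r2 with hx
  have hx1 : (1 + M2 * C) *ᵥ x = r2 := by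
    rw [hx, mulVec_mulVec, mul_nonsing_inv _ u2, one_mulVec]
  have hMM : M1 = M2 - χ • vecMulVec r s12 := by
    have e : s1 = s2 + χ • s12 := by rw [← hs]; simp
    have : M1 = M2 + vecMulVec r s2 - vecMulVec r s1 := by rw [← h2, h1]; simp
    rw [this, e, vecMulVec_add, vecMulVec_smul]
    abel
  have hx2 : (1 + M1 * C) *ᵥ x = r2 - (χ * (s12 ⬝ᵥ (C *ᵥ x))) • r := by
    have : (1 + M1 * C) = (1 + M2 * C) - (χ • vecMulVec r s12) * C := by
      rw [hMM, Matrix.sub_mul]; abel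
    rw [this, sub_mulVec, hx1, ← mulVec_mulVec, smul_mulVec, vecMulVec_mulVec]
    simp [smul_smul]
  have hx3 : x = A *ᵥ r2 - (χ * (s12 ⬝ᵥ (C *ᵥ x))) • (A *ᵥ r) := by
    rw [← mulVec_smul, ← mulVec_sub, ← hx2, mulVec_mulVec, hA, nonsing_inv_mul _ u1, one_mulVec]
  have hXY := congrArg (fun v => s1 ⬝ᵥ (C *ᵥ v)) hx3
  simp only [mulVec_sub, mulVec_smul, dotProduct_sub, dotProduct_smul, smul_eq_mul] at hXY
  have hr' := congrArg (fun v => s1 ⬝ᵥ (C *ᵥ (A *ᵥ v))) hr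
  simp only [mulVec_sub, mulVec_smul, dotProduct_sub, dotProduct_smul, smul_eq_mul] at hr'
  have hs' := congrArg (fun v => v ⬝ᵥ (C *ᵥ x)) hs
  simp only [sub_dotProduct, smul_dotProduct, smul_eq_mul] at hs'
  rw [d1, d2]
  generalize (1 + M1 * C).det = D1 at *
  generalize (1 + M2 * C).det = D2 at *
  generalize s12 ⬝ᵥ (C *ᵥ x) = a1 at *
  generalize s1 ⬝ᵥ (C *ᵥ x) = a2 at *
  generalize s2 ⬝ᵥ (C *ᵥ x) = a3 at *
  generalize s1 ⬝ᵥ (C *ᵥ (A *ᵥ r)) = a4 at *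
  generalize s1 ⬝ᵥ (C *ᵥ (A *ᵥ r1)) = a5 at *
  generalize s1 ⬝ᵥ (C *ᵥ (A *ᵥ r2)) = a6 at *
  linear_combination D1 * D2 * (hs' - hr' - hXY)

namespace KPData

variable {N N' : ℕ} (D : KPData N N')

/-- reduced plane wave -/
def ra (i : Fin N) (n m h : ℤ) : ℂ :=
  D.L.Phi D.del (-(D.κ i)) ^ n * D.L.Phi D.eps (-(D.κ i)) ^ m * D.L.Phi D.lam (-(D.κ i)) ^ h * D.ρ0 i

/-- reduced adjoint plane wave -/
def nb (j : Fin N') (n m h : ℤ) : ℂ :=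
  D.L.Phi D.del (D.κ' j) ^ (-n) * D.L.Phi D.eps (D.κ' j) ^ (-m) * D.L.Phi D.lam (D.κ' j) ^ (-h)
    * D.ν0 j

lemma r_eq (n m h : ℤ) (i : Fin N) :
    D.r n m h i = D.ra i n m h * D.L.Phi (D.xi n m h) (D.κ i) := by
  unfold r ρ ra
  simp only [EllLattice.exp_Psi']
  rw [← D.L.exp_Psi (D.xi n m h) (D.κ i)]
  ring

lemma s_eq (n m h : ℤ) (j : Fin N') :
    D.s n m h j = D.nb j n m h * D.L.Phi (D.xi n m h) (D.κ' j) := by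
  unfold s ν nb
  simp only [EllLattice.exp_Psi]
  rw [← D.L.exp_Psi (D.xi n m h) (D.κ' j)]
  ring

lemma M_eq (n m h : ℤ) (i : Fin N) (j : Fin N') :
    D.M n m h i j = D.ra i n m h * D.nb j n m h * D.L.Phi (D.xi n m h) (D.κ i + D.κ' j) := by
  unfold M ρ ν ra nb
  simp only [EllLattice.exp_Psi, EllLattice.exp_Psi', Matrix.of_apply]
  rw [← D.L.exp_Psi (D.xi n m h) (D.κ i + D.κ' j), mul_add, Complex.exp_add]
  ring

lemma xi_n (n m h : ℤ) : D.xi (n + 1) m h = D.xi n m h + D.del := by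
  simp only [xi, add_smul, one_smul]; ring

lemma xi_m (n m h : ℤ) : D.xi n (m + 1) h = D.xi n m h + D.eps := by
  simp only [xi, add_smul, one_smul]; ring

variable {D}

lemma g0 (hg : D.Generic ![]) (c0 cn cm ch : ℤ)
    (h : ¬ (c0 = 0 ∧ cn = 0 ∧ cm = 0 ∧ ch = 0)) {z : ℂ}
    (hz : z = c0 • D.xi0 + cn • D.del + cm • D.eps + ch • D.lam) : ¬ D.L.mem z := by
  have := hg c0 cn cm ch 0 0 0 (by tauto)
  rw [hz]
  simpa using this

lemma g1 (hg : D.Generic ![]) (c0 cn cm ch a : ℤ) (i : Fin N) (ha : a ≠ 0) {z : ℂ}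
    (hz : z = c0 • D.xi0 + cn • D.del + cm • D.eps + ch • D.lam + a • D.κ i) : ¬ D.L.mem z := by
  have := hg c0 cn cm ch (Pi.single i a) 0 0 (by simp [ha])
  rw [hz]
  simpa [Pi.single_apply] using this

lemma g2 (hg : D.Generic ![]) (c0 cn cm ch a : ℤ) (i : Fin N') (ha : a ≠ 0) {z : ℂ}
    (hz : z = c0 • D.xi0 + cn • D.del + cm • D.eps + ch • D.lam + a • D.κ' i) : ¬ D.L.mem z := by
  have := hg c0 cn cm ch 0 (Pi.single i a) 0 (by simp [ha])
  rw [hz]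
  simpa [Pi.single_apply] using this

lemma g3 (hg : D.Generic ![]) (i : Fin N) (j : Fin N') : ¬ D.L.mem (D.κ i + D.κ' j) := by
  have := hg 0 0 0 0 (Pi.single i 1) (Pi.single j 1) 0 (by simp)
  simpa [Pi.single_apply] using this

lemma gxi (hg : D.Generic ![]) (n m h : ℤ) : ¬ D.L.mem (D.xi n m h) :=
  g0 hg 1 n m h (by simp) (by simp [xi])

lemma gdel (hg : D.Generic ![]) : ¬ D.L.mem D.del := g0 hg 0 1 0 0 (by simp) (by simp)
lemma geps (hg : D.Generic ![]) : ¬ D.L.mem D.eps := g0 hg 0 0 1 0 (by simp) (by simp)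
lemma gk (hg : D.Generic ![]) (i : Fin N) : ¬ D.L.mem (D.κ i) :=
  g1 hg 0 0 0 0 1 i (by simp) (by simp)
lemma gk' (hg : D.Generic ![]) (i : Fin N') : ¬ D.L.mem (D.κ' i) :=
  g2 hg 0 0 0 0 1 i (by simp) (by simp)
lemma gxik (hg : D.Generic ![]) (n m h : ℤ) (i : Fin N) : ¬ D.L.mem (D.xi n m h + D.κ i) :=
  g1 hg 1 n m h 1 i (by simp) (by simp [xi])
lemma gxik' (hg : D.Generic ![]) (n m h : ℤ) (i : Fin N') : ¬ D.L.mem (D.xi n m h + D.κ' i) :=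
  g2 hg 1 n m h 1 i (by simp) (by simp [xi])

lemma ra_n (hg : D.Generic ![]) (n m h : ℤ) (i : Fin N) :
    D.ra i (n + 1) m h = D.ra i n m h * D.L.Phi D.del (-(D.κ i)) := by
  have : D.L.Phi D.del (-(D.κ i)) ≠ 0 := D.L.Phi_ne (gdel hg) (D.L.mem_neg (gk hg i))
    (g1 hg 0 1 0 0 (-1) i (by simp) (by simp))
  unfold ra
  rw [zpow_add_one₀ this]; ring

lemma ra_m (hg : D.Generic ![]) (n m h : ℤ) (i : Fin N) :
    D.ra i n (m + 1) h = D.ra i n m h * D.L.Phi D.eps (-(D.κ i)) := by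
  have : D.L.Phi D.eps (-(D.κ i)) ≠ 0 := D.L.Phi_ne (geps hg) (D.L.mem_neg (gk hg i))
    (g1 hg 0 0 1 0 (-1) i (by simp) (by simp))
  unfold ra
  rw [zpow_add_one₀ this]; ring

lemma nb_n (hg : D.Generic ![]) (n m h : ℤ) (j : Fin N') :
    D.nb j n m h = D.nb j (n + 1) m h * D.L.Phi D.del (D.κ' j) := by
  have : D.L.Phi D.del (D.κ' j) ≠ 0 := D.L.Phi_ne (gdel hg) (gk' hg j)
    (g2 hg 0 1 0 0 1 j (by simp) (by simp))
  unfold nb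
  rw [show -n = -(n + 1) + 1 by ring, zpow_add_one₀ this]; ring

lemma nb_m (hg : D.Generic ![]) (n m h : ℤ) (j : Fin N') :
    D.nb j n m h = D.nb j n (m + 1) h * D.L.Phi D.eps (D.κ' j) := by
  have : D.L.Phi D.eps (D.κ' j) ≠ 0 := D.L.Phi_ne (geps hg) (gk' hg j)
    (g2 hg 0 0 1 0 1 j (by simp) (by simp))
  unfold nb
  rw [show -m = -(m + 1) + 1 by ring, zpow_add_one₀ this]; ring

lemma M_n (hg : D.Generic ![]) (n m h : ℤ) :
    D.M n m h = D.M (n + 1) m h + vecMulVec (D.r n m h) (D.s (n + 1) m h) := by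
  ext i j
  rw [Matrix.add_apply, vecMulVec_apply, M_eq, M_eq, r_eq, s_eq, ra_n hg, nb_n hg n, xi_n]
  have := D.L.Phi_fay (D.xi n m h) D.del (D.κ i) (D.κ' j) (gxi hg _ _ _) (gdel hg)
    (by rw [← xi_n]; exact gxi hg _ _ _) (gk hg i) (gk' hg j) (g3 hg i j)
  linear_combination -(D.ra i n m h * D.nb j (n + 1) m h) * this

lemma M_m (hg : D.Generic ![]) (n m h : ℤ) :
    D.M n m h = D.M n (m + 1) h + vecMulVec (D.r n m h) (D.s n (m + 1) h) := by
  ext i j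
  rw [Matrix.add_apply, vecMulVec_apply, M_eq, M_eq, r_eq, s_eq, ra_m hg, nb_m hg n m, xi_m]
  have := D.L.Phi_fay (D.xi n m h) D.eps (D.κ i) (D.κ' j) (gxi hg _ _ _) (geps hg)
    (by rw [← xi_m]; exact gxi hg _ _ _) (gk hg i) (gk' hg j) (g3 hg i j)
  linear_combination -(D.ra i n m h * D.nb j n (m + 1) h) * this

lemma r_diff (hg : D.Generic ![]) (n m h : ℤ) :
    D.r n (m + 1) h - D.r (n + 1) m h =
      D.L.chi (-D.del) D.eps (D.xi (n + 1) m h) • D.r n m h := by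
  ext i
  simp only [Pi.sub_apply, Pi.smul_apply, smul_eq_mul]
  rw [r_eq, r_eq, r_eq, ra_n hg, ra_m hg, xi_n, xi_m, EllLattice.Phi_neg_neg,
    EllLattice.Phi_neg_neg]
  have e1 := D.L.Phi_z (D.xi n m h + D.del) (-D.del) (D.κ i)
    (by rw [← xi_n]; exact gxi hg _ _ _) (D.L.mem_neg (gdel hg)) (gk hg i)
    (by simpa using gxi hg n m h) (by simpa using gxik hg n m h i)
  have e2 := D.L.Phi_z (D.xi n m h + D.eps) (-D.eps) (D.κ i)
    (by rw [← xi_m]; exact gxi hg _ _ _) (D.L.mem_neg (geps hg)) (gk hg i)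
    (by simpa using gxi hg n m h) (by simpa using gxik hg n m h i)
  rw [add_neg_cancel_right] at e1 e2
  unfold EllLattice.chi
  rw [add_neg_cancel_right, EllLattice.zeta_neg] at *
  linear_combination D.ra i n m h * (e1 - e2)

lemma s_diff (hg : D.Generic ![]) (n m h : ℤ) :
    D.s (n + 1) m h - D.s n (m + 1) h =
      D.L.chi (-D.del) D.eps (D.xi (n + 1) m h) • D.s (n + 1) (m + 1) h := by
  ext j
  simp only [Pi.sub_apply, Pi.smul_apply, smul_eq_mul]
  rw [s_eq, s_eq, s_eq, nb_m hg (n + 1) m, nb_n hg n (m + 1), xi_m, xi_m, xi_n]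
  have hx : D.xi n m h + D.eps + D.del = D.xi n m h + D.del + D.eps := by ring
  have hx' : D.xi (n + 1) (m + 1) h = D.xi n m h + D.del + D.eps := by rw [xi_m, xi_n]
  have e1 := D.L.Phi_z (D.xi n m h + D.del) D.eps (D.κ' j)
    (by rw [← xi_n]; exact gxi hg _ _ _) (geps hg) (gk' hg j)
    (by rw [← hx']; exact gxi hg _ _ _) (by rw [← hx']; exact gxik' hg _ _ _ _)
  have e2 := D.L.Phi_z (D.xi n m h + D.eps) D.del (D.κ' j)
    (by rw [← xi_m]; exact gxi hg _ _ _) (gdel hg) (gk' hg j)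
    (by rw [hx, ← hx']; exact gxi hg _ _ _) (by rw [hx, ← hx']; exact gxik' hg _ _ _ _)
  rw [hx] at e2
  unfold EllLattice.chi
  rw [add_neg_cancel_right, EllLattice.zeta_neg]
  linear_combination D.nb j (n + 1) (m + 1) h * (e1 - e2)

end KPData

/-- Relation between `w` and the τ-function:
`(ŵ − w̃)·τ̃·τ̂ = −χ_{−δ,ε}(ξ+δ)·τ·τ̂̃`. -/
theorem w_tau_relation {N N' : ℕ} (D : KPData N N')
    (hρ0 : ∀ i, D.ρ0 i ≠ 0) (hν0 : ∀ j, D.ν0 j ≠ 0)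
    (hgen : D.Generic ![])
    (hInv : ∀ n m h : ℤ, IsUnit ((1 + D.M n m h * D.C).det)) :
    ∀ n m h : ℤ,
      (D.w n (m + 1) h - D.w (n + 1) m h) * D.τ (n + 1) m h * D.τ n (m + 1) h =
        -(D.L.chi (-D.del) D.eps (D.xi (n + 1) m h)) * D.τ n m h *
          D.τ (n + 1) (m + 1) h := by
  intro n m h
  have key := matrix_core (D.M n m h) (D.M (n + 1) m h) (D.M n (m + 1) h) (D.M (n + 1) (m + 1) h)
    D.C (D.r n m h) (D.r (n + 1) m h) (D.r n (m + 1) h) (D.s (n + 1) m h) (D.s n (m + 1) h)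
    (D.s (n + 1) (m + 1) h) (D.L.chi (-D.del) D.eps (D.xi (n + 1) m h))
    (KPData.M_n hgen n m h) (KPData.M_m hgen n m h) (KPData.M_n hgen n (m + 1) h)
    (KPData.r_diff hgen n m h) (KPData.s_diff hgen n m h) (hInv _ _ _) (hInv _ _ _)
  have hw : D.w n (m + 1) h - D.w (n + 1) m h =
      -(D.L.chi (-D.del) D.eps (D.xi (n + 1) m h)) + D.w0 (n + 1) m h - D.w0 n (m + 1) h := by
    unfold KPData.w EllLattice.chi
    rw [D.xi_n, D.xi_m, add_neg_cancel_right, EllLattice.zeta_neg]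
    simp only [zsmul_eq_mul]
    push_cast
    ring
  rw [hw]
  exact key
end
end
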